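/- Let μ, ν > 0 and let (u,b) be a smooth solution of the 2D stationary MHD system -μΔu + u·∇u + ∇π = b·∇b, -νΔb + u·∇b = b·∇u, div u = div b = 0 on ℝ², with finite Dirichlet energy D(u,b) = ∫_{ℝ²} (|∇u|² + |∇b|²) dx ≤ D₀ < ∞. There exists an absolute constant C* > 0 such that if ‖b‖_{L¹(ℝ²)} · D₀^{1/2} ≤ C* min{μν, μ^{1/2}ν^{3/2}}, then u and b are constant; moreover b ≡ 0. -/

import Mathlib

open MeasureTheory Real Filter

noncomputable def pd (v : ℝ × ℝ) (g : ℝ × ℝ → ℝ) : ℝ × ℝ → ℝ :=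
  fun x => fderiv ℝ g x v

noncomputable def lap (g : ℝ × ℝ → ℝ) : ℝ × ℝ → ℝ :=
  fun x => pd (1,0) (pd (1,0) g) x + pd (0,1) (pd (0,1) g) x

noncomputable def advect (v : ℝ × ℝ → ℝ × ℝ) (g : ℝ × ℝ → ℝ) : ℝ × ℝ → ℝ :=
  fun x => (v x).1 * pd (1,0) g x + (v x).2 * pd (0,1) g x

noncomputable def divg (v : ℝ × ℝ → ℝ × ℝ) : ℝ × ℝ → ℝ :=
  fun x => pd (1,0) (fun y => (v y).1) x + pd (0,1) (fun y => (v y).2) x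

noncomputable def vort (v : ℝ × ℝ → ℝ × ℝ) : ℝ × ℝ → ℝ :=
  fun x => pd (0,1) (fun y => (v y).1) x - pd (1,0) (fun y => (v y).2) x

/-- The stationary 2D MHD system with viscosity `μ` and resistivity `ν`. -/
def isMHD (μ ν : ℝ) (u b : ℝ × ℝ → ℝ × ℝ) (pr : ℝ × ℝ → ℝ) : Prop :=
  (∀ x, -(μ * lap (fun y => (u y).1) x) + advect u (fun y => (u y).1) x + pd (1,0) pr x
      = advect b (fun y => (b y).1) x) ∧
  (∀ x, -(μ * lap (fun y => (u y).2) x) + advect u (fun y => (u y).2) x + pd (0,1) pr x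
      = advect b (fun y => (b y).2) x) ∧
  (∀ x, -(ν * lap (fun y => (b y).1) x) + advect u (fun y => (b y).1) x
      = advect b (fun y => (u y).1) x) ∧
  (∀ x, -(ν * lap (fun y => (b y).2) x) + advect u (fun y => (b y).2) x
      = advect b (fun y => (u y).2) x) ∧
  (∀ x, divg u x = 0) ∧ (∀ x, divg b x = 0)

/-!
Taking the curl of the system gives transport equations for the vorticity `ω` of `u` and the
current density `j` of `b`. Tested with `ω` and `j`, all transport terms cancel, so `μ ∫ |∇ω|²` and
`ν ∫ |∇j|²` add up to `∫ S j`, where the stretching term `S` is bilinear in `∇u` and `∇b`. For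
divergence-free fields the left-hand side controls `μ X + ν Y`, where `X` and `Y` are the squared
`L²` norms of the Hessians of `u` and `b`. Cauchy–Schwarz, Ladyzhenskaya's inequality for `∇u` and
`∇b`, and the interpolation `(∫ |∇b|²)³ ≲ ‖b‖²_{L¹} Y²` yield
`(μ X + ν Y)⁴ ≲ ‖b‖²_{L¹} ‖∇u‖²_{L²} X Y³`. Since `(μ X + ν Y)⁴ ≥ μ ν³ X Y³`, the smallness
condition forces `X = Y = 0`. The gradients are then constant and square integrable, hence zero,
and `b` is a constant in `L¹`, hence zero as well.

The fields may grow at infinity, so the energy identity has to be localised. A weighted Hardy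
inequality bounds `∫ |u|⁴ + |b|⁴` over the ball of radius `R` by `O(R³)`, which is `o(R⁴)` and
hence enough for the flux through the cutoff to be negligible.
-/

open scoped ContDiff RealInnerProductSpace

/-- The partial derivative in direction `v` of a vector-valued function on the plane, extending
`pd` from scalar functions. -/
noncomputable def partialDeriv {E : Type*} [NormedAddCommGroup E] [NormedSpace ℝ E] (v : ℝ × ℝ)
    (f : ℝ × ℝ → E) : ℝ × ℝ → E :=
  fun x => fderiv ℝ f x v

local notation "∂₁" => partialDeriv ((1 : ℝ), (0 : ℝ))

local notation "∂₂" => partialDeriv ((0 : ℝ), (1 : ℝ))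

section NormedSpace

variable {E F : Type*} [NormedAddCommGroup E] [NormedSpace ℝ E]
  [NormedAddCommGroup F] [NormedSpace ℝ F]

theorem pd_eq_partialDeriv : pd = partialDeriv (E := ℝ) := rfl

theorem contDiff_partialDeriv {n m : ℕ∞ω} {f : ℝ × ℝ → E} (hf : ContDiff ℝ n f) (hmn : m + 1 ≤ n)
    (v : ℝ × ℝ) : ContDiff ℝ m (partialDeriv v f) :=
  (hf.fderiv_right hmn).clm_apply contDiff_const

theorem continuous_partialDeriv {f : ℝ × ℝ → E} (hf : ContDiff ℝ 1 f) (v : ℝ × ℝ) :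
    Continuous (partialDeriv v f) :=
  (contDiff_partialDeriv hf (m := 0) (by simp) v).continuous

theorem differentiable_partialDeriv {f : ℝ × ℝ → E} (hf : ContDiff ℝ 2 f) (v : ℝ × ℝ) :
    Differentiable ℝ (partialDeriv v f) :=
  (contDiff_partialDeriv hf (m := 1) (by norm_num) v).differentiable (by simp)

theorem partialDeriv_comm {f : ℝ × ℝ → E} (hf : ContDiff ℝ 2 f) (v w : ℝ × ℝ) :
    partialDeriv v (partialDeriv w f) = partialDeriv w (partialDeriv v f) := by
  have second : ∀ a b x, partialDeriv a (partialDeriv b f) x = fderiv ℝ (fderiv ℝ f) x a b := by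
    intro a b x
    have hd : DifferentiableAt ℝ (fderiv ℝ f) x :=
      (hf.fderiv_right (m := 1) (by norm_num)).differentiable (by simp) x
    change fderiv ℝ (fun y => fderiv ℝ f y b) x a = _
    rw [fderiv_clm_apply hd (by fun_prop)]
    simp
  ext x
  rw [second, second]
  exact (hf.contDiffAt.isSymmSndFDerivAt (by simp)).eq v w

theorem partialDeriv_add {f g : ℝ × ℝ → E} {x : ℝ × ℝ} (hf : DifferentiableAt ℝ f x)
    (hg : DifferentiableAt ℝ g x) (v : ℝ × ℝ) :
    partialDeriv v (fun y => f y + g y) x = partialDeriv v f x + partialDeriv v g x := by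
  simp [partialDeriv, fderiv_fun_add hf hg]

theorem partialDeriv_sub {f g : ℝ × ℝ → E} {x : ℝ × ℝ} (hf : DifferentiableAt ℝ f x)
    (hg : DifferentiableAt ℝ g x) (v : ℝ × ℝ) :
    partialDeriv v (fun y => f y - g y) x = partialDeriv v f x - partialDeriv v g x := by
  simp [partialDeriv, fderiv_fun_sub hf hg]

theorem partialDeriv_smul {φ : ℝ × ℝ → ℝ} {f : ℝ × ℝ → E} {x : ℝ × ℝ}
    (hφ : DifferentiableAt ℝ φ x) (hf : DifferentiableAt ℝ f x) (v : ℝ × ℝ) :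
    partialDeriv v (fun y => φ y • f y) x =
      φ x • partialDeriv v f x + partialDeriv v φ x • f x := by
  simp [partialDeriv, fderiv_fun_smul hφ hf]

theorem partialDeriv_mul {φ ψ : ℝ × ℝ → ℝ} {x : ℝ × ℝ}
    (hφ : DifferentiableAt ℝ φ x) (hψ : DifferentiableAt ℝ ψ x) (v : ℝ × ℝ) :
    partialDeriv v (fun y => φ y * ψ y) x = φ x * partialDeriv v ψ x + partialDeriv v φ x * ψ x :=
  partialDeriv_smul hφ hψ v

theorem partialDeriv_pow {φ : ℝ × ℝ → ℝ} {x : ℝ × ℝ} (hφ : DifferentiableAt ℝ φ x) (n : ℕ)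
    (v : ℝ × ℝ) :
    partialDeriv v (fun y => φ y ^ n) x = n * φ x ^ (n - 1) * partialDeriv v φ x := by
  simp [partialDeriv, fderiv_fun_pow n hφ, mul_assoc]

theorem fderiv_apply_eq_smul_partialDeriv (f : ℝ × ℝ → E) (x v : ℝ × ℝ) :
    fderiv ℝ f x v = v.1 • ∂₁ f x + v.2 • ∂₂ f x := by
  have hv : v = v.1 • ((1 : ℝ), (0 : ℝ)) + v.2 • ((0 : ℝ), (1 : ℝ)) := by ext <;> simp
  conv_lhs => rw [hv, map_add, map_smul, map_smul]
  rfl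

/-- The squared Euclidean norm of the gradient. -/
noncomputable def gradSq (f : ℝ × ℝ → E) (x : ℝ × ℝ) : ℝ :=
  ‖∂₁ f x‖ ^ 2 + ‖∂₂ f x‖ ^ 2

/-- The squared Hilbert–Schmidt norm of the Hessian. -/
noncomputable def hessSq (f : ℝ × ℝ → E) (x : ℝ × ℝ) : ℝ :=
  gradSq (∂₁ f) x + gradSq (∂₂ f) x

/-- The Laplacian of a vector-valued function on the plane, extending `lap` from scalar
functions. -/
noncomputable def vecLap (f : ℝ × ℝ → E) (x : ℝ × ℝ) : E :=
  ∂₁ (∂₁ f) x + ∂₂ (∂₂ f) x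

theorem gradSq_nonneg (f : ℝ × ℝ → E) (x : ℝ × ℝ) : 0 ≤ gradSq f x := by
  unfold gradSq; positivity

theorem hessSq_nonneg (f : ℝ × ℝ → E) (x : ℝ × ℝ) : 0 ≤ hessSq f x :=
  add_nonneg (gradSq_nonneg _ x) (gradSq_nonneg _ x)

theorem continuous_gradSq {f : ℝ × ℝ → E} (hf : ContDiff ℝ 1 f) : Continuous (gradSq f) :=
  ((continuous_partialDeriv hf _).norm.pow 2).add ((continuous_partialDeriv hf _).norm.pow 2)

theorem continuous_hessSq {f : ℝ × ℝ → E} (hf : ContDiff ℝ 2 f) : Continuous (hessSq f) :=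
  (continuous_gradSq (contDiff_partialDeriv hf (by norm_num) _)).add
    (continuous_gradSq (contDiff_partialDeriv hf (by norm_num) _))

theorem continuous_vecLap {f : ℝ × ℝ → E} (hf : ContDiff ℝ 2 f) : Continuous (vecLap f) :=
  have hd (v : ℝ × ℝ) : ContDiff ℝ 1 (partialDeriv v f) :=
    contDiff_partialDeriv hf (by norm_num) v
  (continuous_partialDeriv (hd _) _).add (continuous_partialDeriv (hd _) _)

theorem norm_vecLap_sq_le (f : ℝ × ℝ → E) (x : ℝ × ℝ) : ‖vecLap f x‖ ^ 2 ≤ 2 * hessSq f x := by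
  have h : ‖vecLap f x‖ ≤ ‖∂₁ (∂₁ f) x‖ + ‖∂₂ (∂₂ f) x‖ := norm_add_le _ _
  have hsq := pow_le_pow_left₀ (norm_nonneg _) h 2
  unfold hessSq gradSq
  nlinarith [sq_nonneg (‖∂₁ (∂₁ f) x‖ - ‖∂₂ (∂₂ f) x‖), sq_nonneg ‖∂₂ (∂₁ f) x‖,
    sq_nonneg ‖∂₁ (∂₂ f) x‖]

theorem norm_fderiv_sq_le (f : ℝ × ℝ → E) (x : ℝ × ℝ) : ‖fderiv ℝ f x‖ ^ 2 ≤ 2 * gradSq f x := by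
  have h : ‖fderiv ℝ f x‖ ≤ ‖∂₁ f x‖ + ‖∂₂ f x‖ := by
    refine ContinuousLinearMap.opNorm_le_bound _ (by positivity) fun v => ?_
    calc ‖fderiv ℝ f x v‖ = ‖v.1 • ∂₁ f x + v.2 • ∂₂ f x‖ := by
          rw [fderiv_apply_eq_smul_partialDeriv]
      _ ≤ ‖v.1‖ * ‖∂₁ f x‖ + ‖v.2‖ * ‖∂₂ f x‖ := by
          rw [← norm_smul, ← norm_smul]; exact norm_add_le _ _
      _ ≤ ‖v‖ * ‖∂₁ f x‖ + ‖v‖ * ‖∂₂ f x‖ := by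
          gcongr
          exacts [norm_fst_le v, norm_snd_le v]
      _ = _ := by ring
  have hsq := pow_le_pow_left₀ (norm_nonneg _) h 2
  unfold gradSq
  nlinarith [sq_nonneg (‖∂₁ f x‖ - ‖∂₂ f x‖)]

theorem gradSq_smul_le {φ : ℝ × ℝ → ℝ} {f : ℝ × ℝ → E} {x : ℝ × ℝ}
    (hφ : DifferentiableAt ℝ φ x) (hf : DifferentiableAt ℝ f x) :
    gradSq (fun y => φ y • f y) x ≤ 2 * (φ x ^ 2 * gradSq f x + ‖f x‖ ^ 2 * gradSq φ x) := by
  have component (v : ℝ × ℝ) : ‖partialDeriv v (fun y => φ y • f y) x‖ ^ 2 ≤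
      2 * (φ x ^ 2 * ‖partialDeriv v f x‖ ^ 2 + ‖f x‖ ^ 2 * ‖partialDeriv v φ x‖ ^ 2) := by
    rw [partialDeriv_smul hφ hf]
    have h := pow_le_pow_left₀ (norm_nonneg _)
      (norm_add_le (φ x • partialDeriv v f x) (partialDeriv v φ x • f x)) 2
    rw [norm_smul, norm_smul] at h
    rw [← sq_abs (φ x), ← Real.norm_eq_abs]
    nlinarith [sq_nonneg (‖φ x‖ * ‖partialDeriv v f x‖ - ‖partialDeriv v φ x‖ * ‖f x‖)]
  unfold gradSq
  linarith [component (1, 0), component (0, 1)]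

theorem gradSq_pow {φ : ℝ × ℝ → ℝ} {x : ℝ × ℝ} (hφ : DifferentiableAt ℝ φ x) (k : ℕ) :
    gradSq (fun y => φ y ^ (k + 1)) x = (k + 1) ^ 2 * φ x ^ (2 * k) * gradSq φ x := by
  simp only [gradSq, partialDeriv_pow hφ, Real.norm_eq_abs, sq_abs, Nat.add_sub_cancel]
  push_cast
  ring

/-- The function `x ↦ (f x, g x)` into the Hilbert sum, so that squared norms of its derivatives
add up. -/
def l2Pair (f : ℝ × ℝ → E) (g : ℝ × ℝ → F) : ℝ × ℝ → WithLp 2 (E × F) :=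
  fun x => WithLp.toLp 2 (f x, g x)

theorem norm_sq_l2Pair {E F : Type*} [NormedAddCommGroup E] [NormedAddCommGroup F]
    (f : ℝ × ℝ → E) (g : ℝ × ℝ → F) (x : ℝ × ℝ) : ‖l2Pair f g x‖ ^ 2 = ‖f x‖ ^ 2 + ‖g x‖ ^ 2 :=
  WithLp.prod_norm_sq_eq_of_L2 _

theorem contDiff_l2Pair {n : ℕ∞ω} {f : ℝ × ℝ → E} {g : ℝ × ℝ → F} (hf : ContDiff ℝ n f)
    (hg : ContDiff ℝ n g) : ContDiff ℝ n (l2Pair f g) :=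
  (WithLp.prodContinuousLinearEquiv 2 ℝ E F).symm.contDiff.comp (hf.prodMk hg)

theorem partialDeriv_l2Pair {f : ℝ × ℝ → E} {g : ℝ × ℝ → F} (hf : Differentiable ℝ f)
    (hg : Differentiable ℝ g) (v : ℝ × ℝ) :
    partialDeriv v (l2Pair f g) = l2Pair (partialDeriv v f) (partialDeriv v g) := by
  ext1 x
  have h := (WithLp.prodContinuousLinearEquiv 2 ℝ E F).symm.hasFDerivAt.comp x
    ((hf x).hasFDerivAt.prodMk (hg x).hasFDerivAt)
  exact congrArg (fun L : ℝ × ℝ →L[ℝ] WithLp 2 (E × F) => L v) h.fderiv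

theorem gradSq_l2Pair {f : ℝ × ℝ → E} {g : ℝ × ℝ → F} (hf : Differentiable ℝ f)
    (hg : Differentiable ℝ g) (x : ℝ × ℝ) :
    gradSq (l2Pair f g) x = gradSq f x + gradSq g x := by
  simp only [gradSq, partialDeriv_l2Pair hf hg, norm_sq_l2Pair]
  ring

theorem norm_vecLap_l2Pair_sq {f : ℝ × ℝ → E} {g : ℝ × ℝ → F} (hf : ContDiff ℝ 2 f)
    (hg : ContDiff ℝ 2 g) (x : ℝ × ℝ) :
    ‖vecLap (l2Pair f g) x‖ ^ 2 = ‖vecLap f x‖ ^ 2 + ‖vecLap g x‖ ^ 2 := by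
  have hdf := differentiable_partialDeriv hf
  have hdg := differentiable_partialDeriv hg
  rw [← norm_sq_l2Pair (vecLap f) (vecLap g) x]
  simp only [vecLap, partialDeriv_l2Pair (hf.differentiable (by simp))
    (hg.differentiable (by simp)), partialDeriv_l2Pair (hdf _) (hdg _)]
  rfl

/-- The gradient as a Hilbert space valued function, so that results on functions apply to it. -/
noncomputable def grad (f : ℝ × ℝ → E) : ℝ × ℝ → WithLp 2 (E × E) :=
  l2Pair (∂₁ f) (∂₂ f)

theorem norm_sq_grad (f : ℝ × ℝ → E) (x : ℝ × ℝ) : ‖grad f x‖ ^ 2 = gradSq f x :=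
  norm_sq_l2Pair _ _ x

theorem contDiff_grad {n m : ℕ∞ω} {f : ℝ × ℝ → E} (hf : ContDiff ℝ n f) (hmn : m + 1 ≤ n) :
    ContDiff ℝ m (grad f) :=
  contDiff_l2Pair (contDiff_partialDeriv hf hmn _) (contDiff_partialDeriv hf hmn _)

theorem gradSq_grad {f : ℝ × ℝ → E} (hf : ContDiff ℝ 2 f) (x : ℝ × ℝ) :
    gradSq (grad f) x = hessSq f x :=
  gradSq_l2Pair (differentiable_partialDeriv hf _) (differentiable_partialDeriv hf _) x

end NormedSpace

variable {E : Type*} [NormedAddCommGroup E] [InnerProductSpace ℝ E]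

theorem partialDeriv_inner {f g : ℝ × ℝ → E} {x : ℝ × ℝ} (hf : DifferentiableAt ℝ f x)
    (hg : DifferentiableAt ℝ g x) (v : ℝ × ℝ) :
    partialDeriv v (fun y => ⟪f y, g y⟫) x =
      ⟪f x, partialDeriv v g x⟫ + ⟪partialDeriv v f x, g x⟫ :=
  fderiv_inner_apply ℝ hf hg v

theorem partialDeriv_norm_sq {f : ℝ × ℝ → E} {x : ℝ × ℝ} (hf : DifferentiableAt ℝ f x)
    (v : ℝ × ℝ) :
    partialDeriv v (fun y => ‖f y‖ ^ 2) x = 2 * ⟪f x, partialDeriv v f x⟫ := by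
  simp_rw [← real_inner_self_eq_norm_sq]
  rw [partialDeriv_inner hf hf, real_inner_comm, two_mul]

/-! ### Integration -/

theorem divg_smul {φ : ℝ × ℝ → ℝ} {V : ℝ × ℝ → ℝ × ℝ} {x : ℝ × ℝ}
    (hφ : DifferentiableAt ℝ φ x) (hV : DifferentiableAt ℝ V x) :
    divg (fun y => φ y • V y) x = φ x * divg V x + advect V φ x := by
  simp only [divg, advect, pd_eq_partialDeriv, Prod.smul_fst, Prod.smul_snd, smul_eq_mul]
  rw [partialDeriv_mul hφ hV.fst, partialDeriv_mul hφ hV.snd]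
  ring

theorem continuous_divg {V : ℝ × ℝ → ℝ × ℝ} (hV : ContDiff ℝ 1 V) : Continuous (divg V) :=
  (continuous_partialDeriv hV.fst _).add (continuous_partialDeriv hV.snd _)

theorem advect_pow {φ : ℝ × ℝ → ℝ} {x : ℝ × ℝ} (hφ : DifferentiableAt ℝ φ x)
    (V : ℝ × ℝ → ℝ × ℝ) (n : ℕ) :
    advect V (fun y => φ y ^ n) x = n * φ x ^ (n - 1) * advect V φ x := by
  simp only [advect, pd_eq_partialDeriv, partialDeriv_pow hφ]
  ring

theorem advect_sq_le (V : ℝ × ℝ → ℝ × ℝ) (φ : ℝ × ℝ → ℝ) (x : ℝ × ℝ) :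
    advect V φ x ^ 2 ≤ ((V x).1 ^ 2 + (V x).2 ^ 2) * gradSq φ x := by
  simp only [advect, gradSq, pd_eq_partialDeriv, Real.norm_eq_abs, sq_abs]
  nlinarith [sq_nonneg ((V x).1 * ∂₂ φ x - (V x).2 * ∂₁ φ x)]

theorem integral_partialDeriv_eq_zero {f : ℝ × ℝ → ℝ} (hf : ContDiff ℝ 1 f)
    (hc : HasCompactSupport f) (v : ℝ × ℝ) : ∫ x, partialDeriv v f x = 0 := by
  have hi : Integrable (fun x => fderiv ℝ f x v) :=
    (continuous_partialDeriv hf v).integrable_of_hasCompactSupport (hc.fderiv_apply (𝕜 := ℝ) v)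
  have h := integral_mul_fderiv_eq_neg_fderiv_mul_of_integrable (μ := volume)
    (f := fun _ : ℝ × ℝ => (1 : ℝ)) (g := f) (v := v) (by simp) (by simpa using hi)
    (by simpa using hf.continuous.integrable_of_hasCompactSupport hc)
    (fun x _ => by fun_prop) (fun x _ => hf.differentiable (by simp) x)
  simpa [partialDeriv] using h

theorem integrable_and_integral_mul_divg_add_advect {φ : ℝ × ℝ → ℝ} {V : ℝ × ℝ → ℝ × ℝ}
    (hφ : ContDiff ℝ 1 φ) (hc : HasCompactSupport φ) (hV : ContDiff ℝ 1 V) :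
    Integrable (fun x => φ x * divg V x + advect V φ x) ∧
      ∫ x, (φ x * divg V x + advect V φ x) = 0 := by
  have hφV : ContDiff ℝ 1 (fun x => φ x • V x) := hφ.smul hV
  have hcV : HasCompactSupport (fun x => φ x • V x) := hc.smul_right
  have hc₁ : HasCompactSupport (fun x => (φ x • V x).1) := hcV.comp_left (g := Prod.fst) rfl
  have hc₂ : HasCompactSupport (fun x => (φ x • V x).2) := hcV.comp_left (g := Prod.snd) rfl
  have hi₁ : Integrable (∂₁ fun x => (φ x • V x).1) :=
    (continuous_partialDeriv hφV.fst _).integrable_of_hasCompactSupport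
      (hc₁.fderiv_apply (𝕜 := ℝ) _)
  have hi₂ : Integrable (∂₂ fun x => (φ x • V x).2) :=
    (continuous_partialDeriv hφV.snd _).integrable_of_hasCompactSupport
      (hc₂.fderiv_apply (𝕜 := ℝ) _)
  have hdiv (x : ℝ × ℝ) : φ x * divg V x + advect V φ x =
      ∂₁ (fun x => (φ x • V x).1) x + ∂₂ (fun x => (φ x • V x).2) x :=
    (divg_smul (hφ.differentiable (by simp) x) (hV.differentiable (by simp) x)).symm
  simp_rw [hdiv]
  refine ⟨hi₁.add hi₂, ?_⟩
  rw [integral_add hi₁ hi₂, integral_partialDeriv_eq_zero hφV.fst hc₁,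
    integral_partialDeriv_eq_zero hφV.snd hc₂, add_zero]

theorem hasCompactSupport_pow {φ : ℝ × ℝ → ℝ} (hc : HasCompactSupport φ) {n : ℕ} (hn : n ≠ 0) :
    HasCompactSupport (fun x => φ x ^ n) :=
  hc.mono fun x hx hzero => hx (by simp [hzero, hn])

section Measure

variable {α : Type*} [MeasurableSpace α] {m : Measure α} {f g : α → ℝ}

theorem integrable_mul_of_sq (hfm : AEStronglyMeasurable f m) (hgm : AEStronglyMeasurable g m)
    (hf : Integrable (fun x => f x ^ 2) m) (hg : Integrable (fun x => g x ^ 2) m) :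
    Integrable (fun x => f x * g x) m :=
  ((memLp_two_iff_integrable_sq hfm).2 hf).integrable_mul ((memLp_two_iff_integrable_sq hgm).2 hg)

theorem sq_integral_mul_le (hfm : AEStronglyMeasurable f m) (hgm : AEStronglyMeasurable g m)
    (hf : Integrable (fun x => f x ^ 2) m) (hg : Integrable (fun x => g x ^ 2) m) :
    (∫ x, f x * g x ∂m) ^ 2 ≤ (∫ x, f x ^ 2 ∂m) * ∫ x, g x ^ 2 ∂m := by
  have hfg := integrable_mul_of_sq hfm hgm hf hg
  have quadratic (t : ℝ) : 0 ≤ (∫ x, f x ^ 2 ∂m) * (t * t) + (2 * ∫ x, f x * g x ∂m) * t +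
      ∫ x, g x ^ 2 ∂m := by
    calc 0 ≤ ∫ x, (t * f x + g x) ^ 2 ∂m := integral_nonneg fun x => sq_nonneg _
      _ = ∫ x, (t * t * f x ^ 2 + 2 * t * (f x * g x) + g x ^ 2) ∂m := by
        congr 1 with x; ring
      _ = _ := by
        rw [integral_add ((hf.const_mul _).fun_add (hfg.const_mul _)) hg,
          integral_add (hf.const_mul _) (hfg.const_mul _), integral_const_mul, integral_const_mul]
        ring
  have hdiscrim := discrim_le_zero quadratic
  unfold discrim at hdiscrim
  linarith

/-- Jensen's inequality for the cube and the weight `g`, by integrating the tangent line of the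
cube at the weighted mean of `f`. -/
theorem integral_mul_pow_three_le (hf0 : 0 ≤ f) (hg0 : 0 ≤ g) (hg : Integrable g m)
    (hfg : Integrable (fun x => f x * g x) m) (hf3g : Integrable (fun x => f x ^ 3 * g x) m) :
    (∫ x, f x * g x ∂m) ^ 3 ≤ (∫ x, g x ∂m) ^ 2 * ∫ x, f x ^ 3 * g x ∂m := by
  set N := ∫ x, g x ∂m
  set P := ∫ x, f x * g x ∂m
  have hP : 0 ≤ P := integral_nonneg fun x => mul_nonneg (hf0 x) (hg0 x)
  rcases (integral_nonneg hg0 : 0 ≤ N).eq_or_lt with hN | hN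
  · have hg_ae : g =ᵐ[m] 0 := (integral_eq_zero_iff_of_nonneg hg0 hg).1 hN.symm
    have hP0 : P = 0 := integral_eq_zero_of_ae (hg_ae.mono fun x hx => by simp [hx])
    have hN0 : N = 0 := hN.symm
    simp [hP0, hN0]
  have hN0 : N ≠ 0 := hN.ne'
  have tangent (x : α) :
      3 * (P / N) ^ 2 * (f x * g x) - 2 * (P / N) ^ 3 * g x ≤ f x ^ 3 * g x := by
    have hcube : 3 * (P / N) ^ 2 * f x - 2 * (P / N) ^ 3 ≤ f x ^ 3 := by
      nlinarith [mul_nonneg (add_nonneg (hf0 x) (mul_nonneg zero_le_two (div_nonneg hP hN.le)))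
        (sq_nonneg (f x - P / N))]
    linarith [mul_le_mul_of_nonneg_right hcube (hg0 x)]
  have h := integral_mono ((hfg.const_mul _).sub (hg.const_mul _)) hf3g tangent
  rw [integral_sub' (hfg.const_mul _) (hg.const_mul _), integral_const_mul, integral_const_mul] at h
  calc P ^ 3 = N ^ 2 * (3 * (P / N) ^ 2 * P - 2 * (P / N) ^ 3 * N) := by field_simp; norm_num
    _ ≤ _ := by gcongr

end Measure

/-! ### Sobolev and Ladyzhenskaya inequalities -/

/-- An admissible constant in the Sobolev inequality `∫ g ^ 2 ≤ sobolevConst * (∫ ‖∇g‖) ^ 2`. -/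
noncomputable def sobolevConst : ℝ :=
  lintegralPowLePowLIntegralFDerivConst (volume : Measure (ℝ × ℝ)) 2

theorem sobolevConst_nonneg : 0 ≤ sobolevConst := NNReal.coe_nonneg _

theorem integral_sq_le_mul_sq_integral_norm_fderiv {g : ℝ × ℝ → ℝ} (hg : ContDiff ℝ 1 g)
    (hc : HasCompactSupport g) :
    ∫ x, g x ^ 2 ≤ sobolevConst * (∫ x, ‖fderiv ℝ g x‖) ^ 2 := by
  have hp : Real.HolderConjugate (Module.finrank ℝ (ℝ × ℝ)) 2 := by
    rw [Module.finrank_prod, Module.finrank_self, Real.holderConjugate_iff]; norm_num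
  have h := lintegral_pow_le_pow_lintegral_fderiv (volume : Measure (ℝ × ℝ)) hg hc hp
  have hi : Integrable (fun x => ‖fderiv ℝ g x‖) :=
    (hg.continuous_fderiv (by simp)).norm.integrable_of_hasCompactSupport (hc.fderiv (𝕜 := ℝ)).norm
  have hi2 : Integrable (fun x => g x ^ 2) :=
    (hg.continuous.pow 2).integrable_of_hasCompactSupport (hasCompactSupport_pow hc two_ne_zero)
  have lhs_eq : ∫⁻ x, ‖g x‖ₑ ^ (2 : ℝ) = ENNReal.ofReal (∫ x, g x ^ 2) := by
    rw [ofReal_integral_eq_lintegral_ofReal hi2 (ae_of_all _ fun x => sq_nonneg _)]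
    refine lintegral_congr fun x => ?_
    rw [Real.enorm_eq_ofReal_abs, ENNReal.ofReal_rpow_of_nonneg (abs_nonneg _) (by norm_num)]
    norm_num
  have rhs_eq : ∫⁻ x, ‖fderiv ℝ g x‖ₑ = ENNReal.ofReal (∫ x, ‖fderiv ℝ g x‖) := by
    rw [ofReal_integral_eq_lintegral_ofReal hi (ae_of_all _ fun x => norm_nonneg _)]
    simp
  have hn : 0 ≤ ∫ x, ‖fderiv ℝ g x‖ := integral_nonneg fun x => norm_nonneg _
  rw [lhs_eq, rhs_eq, ENNReal.ofReal_rpow_of_nonneg hn (by norm_num), ← ENNReal.ofReal_coe_nnreal,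
    ← ENNReal.ofReal_mul (by positivity), ENNReal.ofReal_le_ofReal_iff (by positivity)] at h
  norm_num at h
  exact h

/-- An admissible constant in the Ladyzhenskaya inequality
`∫ ‖f‖ ^ 4 ≤ ladyzhenskayaConst * ∫ ‖f‖ ^ 2 * ∫ gradSq f`. -/
noncomputable def ladyzhenskayaConst : ℝ :=
  8 * sobolevConst + 1

theorem ladyzhenskayaConst_pos : 0 < ladyzhenskayaConst := by
  linarith [sobolevConst_nonneg, show ladyzhenskayaConst = 8 * sobolevConst + 1 from rfl]

theorem hasCompactSupport_gradSq {f : ℝ × ℝ → E} (hc : HasCompactSupport f) :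
    HasCompactSupport (gradSq f) :=
  (hc.fderiv (𝕜 := ℝ)).mono fun x hx hzero => hx (by simp [gradSq, partialDeriv, hzero])

theorem norm_fderiv_norm_sq_le {f : ℝ × ℝ → E} {x : ℝ × ℝ} (hf : DifferentiableAt ℝ f x) :
    ‖fderiv ℝ (fun y => ‖f y‖ ^ 2) x‖ ≤ 2 * (‖f x‖ * ‖fderiv ℝ f x‖) := by
  refine ContinuousLinearMap.opNorm_le_bound _ (by positivity) fun v => ?_
  have h : fderiv ℝ (fun y => ‖f y‖ ^ 2) x v = 2 * ⟪f x, fderiv ℝ f x v⟫ :=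
    partialDeriv_norm_sq hf v
  rw [h, norm_mul, Real.norm_two, mul_assoc, mul_assoc]
  gcongr
  exact (norm_inner_le_norm _ _).trans (by gcongr; exact ContinuousLinearMap.le_opNorm _ v)

theorem integral_norm_pow_four_le_of_hasCompactSupport {f : ℝ × ℝ → E} (hf : ContDiff ℝ 1 f)
    (hc : HasCompactSupport f) :
    ∫ x, ‖f x‖ ^ 4 ≤ ladyzhenskayaConst * (∫ x, ‖f x‖ ^ 2) * ∫ x, gradSq f x := by
  have hC := sobolevConst_nonneg
  have hdc : Continuous (fun x => ‖fderiv ℝ f x‖) := (hf.continuous_fderiv (by simp)).norm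
  have hdcs : HasCompactSupport (fun x => ‖fderiv ℝ f x‖) := (hc.fderiv (𝕜 := ℝ)).norm
  have hc2 : HasCompactSupport (fun x => ‖f x‖ ^ 2) := hasCompactSupport_pow hc.norm two_ne_zero
  have hf2 : Integrable (fun x => ‖f x‖ ^ 2) :=
    (hf.continuous.norm.pow 2).integrable_of_hasCompactSupport hc2
  have hd2 : Integrable (fun x => ‖fderiv ℝ f x‖ ^ 2) :=
    (hdc.pow 2).integrable_of_hasCompactSupport (hasCompactSupport_pow hdcs two_ne_zero)
  have hgrad : Integrable (gradSq f) :=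
    (continuous_gradSq hf).integrable_of_hasCompactSupport (hasCompactSupport_gradSq hc)
  have hd_norm_sq : ∫ x, ‖fderiv ℝ (fun y => ‖f y‖ ^ 2) x‖ ≤ 2 * ∫ x, ‖f x‖ * ‖fderiv ℝ f x‖ := by
    rw [← integral_const_mul]
    refine integral_mono_of_nonneg (ae_of_all _ fun x => norm_nonneg _) ?_
      (ae_of_all _ fun x => norm_fderiv_norm_sq_le (hf.differentiable (by simp) x))
    exact (integrable_mul_of_sq hf.continuous.norm.aestronglyMeasurable
      hdc.aestronglyMeasurable hf2 hd2).const_mul 2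
  calc ∫ x, ‖f x‖ ^ 4 = ∫ x, (‖f x‖ ^ 2) ^ 2 := by simp_rw [← pow_mul]
    _ ≤ sobolevConst * (∫ x, ‖fderiv ℝ (fun y => ‖f y‖ ^ 2) x‖) ^ 2 :=
      integral_sq_le_mul_sq_integral_norm_fderiv (hf.norm_sq ℝ) hc2
    _ ≤ sobolevConst * (2 * ∫ x, ‖f x‖ * ‖fderiv ℝ f x‖) ^ 2 := by gcongr
    _ = 4 * sobolevConst * (∫ x, ‖f x‖ * ‖fderiv ℝ f x‖) ^ 2 := by ring
    _ ≤ 4 * sobolevConst * ((∫ x, ‖f x‖ ^ 2) * ∫ x, ‖fderiv ℝ f x‖ ^ 2) := by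
      gcongr
      exact sq_integral_mul_le hf.continuous.norm.aestronglyMeasurable
        hdc.aestronglyMeasurable hf2 hd2
    _ ≤ 4 * sobolevConst * ((∫ x, ‖f x‖ ^ 2) * (2 * ∫ x, gradSq f x)) := by
      gcongr
      rw [← integral_const_mul]
      exact integral_mono hd2 (hgrad.const_mul 2) (norm_fderiv_sq_le f)
    _ = 8 * sobolevConst * (∫ x, ‖f x‖ ^ 2) * ∫ x, gradSq f x := by ring
    _ ≤ _ := by
      gcongr
      · exact integral_nonneg (gradSq_nonneg f)
      · exact le_add_of_nonneg_right zero_le_one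

theorem integral_pow_four_mul_norm_pow_four_le {φ : ℝ × ℝ → ℝ} {f : ℝ × ℝ → E}
    (hφ : ContDiff ℝ 1 φ) (hc : HasCompactSupport φ) (hf : ContDiff ℝ 1 f) :
    ∫ x, φ x ^ 4 * ‖f x‖ ^ 4 ≤ 2 * ladyzhenskayaConst * (∫ x, φ x ^ 2 * ‖f x‖ ^ 2) *
      ((∫ x, φ x ^ 2 * gradSq f x) + ∫ x, ‖f x‖ ^ 2 * gradSq φ x) := by
  have hφf : ContDiff ℝ 1 (fun x => φ x • f x) := hφ.smul hf
  have hcφf : HasCompactSupport (fun x => φ x • f x) := hc.smul_right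
  have hnorm (n : ℕ) (x : ℝ × ℝ) (hn : Even n) : ‖φ x • f x‖ ^ n = φ x ^ n * ‖f x‖ ^ n := by
    rw [norm_smul, mul_pow, Real.norm_eq_abs, hn.pow_abs]
  have h := integral_norm_pow_four_le_of_hasCompactSupport hφf hcφf
  simp_rw [hnorm 4 _ (by decide), hnorm 2 _ (by decide)] at h
  have hi₁ : Integrable (fun x => φ x ^ 2 * gradSq f x) :=
    ((hφ.continuous.pow 2).mul (continuous_gradSq hf)).integrable_of_hasCompactSupport
      (hasCompactSupport_pow hc two_ne_zero).mul_right
  have hi₂ : Integrable (fun x => ‖f x‖ ^ 2 * gradSq φ x) :=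
    ((hf.continuous.norm.pow 2).mul (continuous_gradSq hφ)).integrable_of_hasCompactSupport
      (hasCompactSupport_gradSq hc).mul_left
  have hgrad : ∫ x, gradSq (fun y => φ y • f y) x ≤
      2 * ((∫ x, φ x ^ 2 * gradSq f x) + ∫ x, ‖f x‖ ^ 2 * gradSq φ x) := by
    rw [← integral_add hi₁ hi₂, ← integral_const_mul]
    refine integral_mono_of_nonneg (ae_of_all _ (gradSq_nonneg _)) ((hi₁.add hi₂).const_mul 2)
      (ae_of_all _ fun x => gradSq_smul_le (hφ.differentiable (by simp) x)
        (hf.differentiable (by simp) x))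
  have hnn : 0 ≤ ladyzhenskayaConst * ∫ x, φ x ^ 2 * ‖f x‖ ^ 2 :=
    mul_nonneg ladyzhenskayaConst_pos.le (integral_nonneg fun x => by positivity)
  linarith [mul_le_mul_of_nonneg_left hgrad hnn]

/-! ### Cutoffs -/

theorem gradSq_comp_smul (f : ℝ × ℝ → E) (c : ℝ) (x : ℝ × ℝ) :
    gradSq (fun y => f (c • y)) x = c ^ 2 * gradSq f (c • x) := by
  simp only [gradSq, partialDeriv, fderiv_comp_smul, _root_.smul_apply, norm_smul, mul_pow,
    Real.norm_eq_abs, sq_abs]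
  ring

/-- A smooth radial cutoff, equal to `1` where `|x| ≤ R` and to `0` where `|x| ≥ √2 R`. -/
noncomputable def cutoff (R : ℝ) (x : ℝ × ℝ) : ℝ :=
  smoothTransition (2 - (x.1 ^ 2 + x.2 ^ 2) / R ^ 2)

/-- The maximal squared gradient of the unit-scale cutoff. -/
noncomputable def cutoffGradBound : ℝ :=
  ⨆ x, gradSq (cutoff 1) x

section Cutoff

variable {R : ℝ}

theorem contDiff_cutoff {n : ℕ∞} (R : ℝ) : ContDiff ℝ n (cutoff R) := by
  unfold cutoff
  exact smoothTransition.contDiff.comp (by fun_prop)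

theorem differentiable_cutoff (R : ℝ) : Differentiable ℝ (cutoff R) :=
  (contDiff_cutoff (n := 1) R).differentiable (by simp)

theorem cutoff_nonneg (R : ℝ) (x : ℝ × ℝ) : 0 ≤ cutoff R x := smoothTransition.nonneg _

theorem cutoff_le_one (R : ℝ) (x : ℝ × ℝ) : cutoff R x ≤ 1 := smoothTransition.le_one _

theorem cutoff_eq_one (hR : 0 < R) {x : ℝ × ℝ} (h : x.1 ^ 2 + x.2 ^ 2 ≤ R ^ 2) :
    cutoff R x = 1 := by
  have : (x.1 ^ 2 + x.2 ^ 2) / R ^ 2 ≤ 1 := (div_le_one (by positivity)).2 h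
  exact smoothTransition.one_of_one_le (by linarith)

theorem cutoff_eq_zero (hR : 0 < R) {x : ℝ × ℝ} (h : 2 * R ^ 2 ≤ x.1 ^ 2 + x.2 ^ 2) :
    cutoff R x = 0 := by
  have : 2 ≤ (x.1 ^ 2 + x.2 ^ 2) / R ^ 2 := (le_div_iff₀ (by positivity)).2 h
  exact smoothTransition.zero_of_nonpos (by linarith)

theorem gradSq_cutoff_eq_zero (hR : 0 < R) {x : ℝ × ℝ} (h : 2 * R ^ 2 < x.1 ^ 2 + x.2 ^ 2) :
    gradSq (cutoff R) x = 0 := by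
  have hopen : IsOpen {y : ℝ × ℝ | 2 * R ^ 2 < y.1 ^ 2 + y.2 ^ 2} :=
    isOpen_lt (by fun_prop) (by fun_prop)
  have hzero : cutoff R =ᶠ[nhds x] fun _ => 0 :=
    eventually_of_mem (hopen.mem_nhds h) fun y hy => cutoff_eq_zero hR (le_of_lt hy)
  simp [gradSq, partialDeriv, hzero.fderiv_eq]

theorem hasCompactSupport_cutoff (hR : 0 < R) : HasCompactSupport (cutoff R) := by
  refine HasCompactSupport.intro (isCompact_closedBall (0 : ℝ × ℝ) (2 * R)) fun x hx =>
    cutoff_eq_zero hR ?_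
  have h : 2 * R < ‖x‖ := by simpa using hx
  rw [Prod.norm_def, lt_max_iff, Real.norm_eq_abs, Real.norm_eq_abs] at h
  rcases h with h | h
  · nlinarith [sq_abs x.1, sq_nonneg x.2]
  · nlinarith [sq_abs x.2, sq_nonneg x.1]

theorem cutoffGradBound_nonneg : 0 ≤ cutoffGradBound :=
  Real.iSup_nonneg (gradSq_nonneg _)

theorem gradSq_cutoff_le (R : ℝ) (x : ℝ × ℝ) :
    gradSq (cutoff R) x ≤ cutoffGradBound / R ^ 2 := by
  have hbdd : BddAbove (Set.range (gradSq (cutoff 1))) :=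
    (continuous_gradSq (contDiff_cutoff (n := 1) 1)).bddAbove_range_of_hasCompactSupport
      (hasCompactSupport_gradSq (hasCompactSupport_cutoff one_pos))
  have hscale : cutoff R = fun y => cutoff 1 (R⁻¹ • y) := by
    ext y
    simp only [cutoff, Prod.smul_fst, Prod.smul_snd, smul_eq_mul]
    congr 1
    ring
  rw [hscale, gradSq_comp_smul, div_eq_inv_mul, ← inv_pow]
  exact mul_le_mul_of_nonneg_left (le_ciSup hbdd _) (sq_nonneg _)

theorem advect_id_cutoff_nonpos (R : ℝ) (x : ℝ × ℝ) : advect id (cutoff R) x ≤ 0 := by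
  have hq : HasFDerivAt (fun y : ℝ × ℝ => 2 - (y.1 ^ 2 + y.2 ^ 2) * (R ^ 2)⁻¹) _ x :=
    ((((hasFDerivAt_fst (𝕜 := ℝ) (p := x)).pow 2).add
      ((hasFDerivAt_snd (𝕜 := ℝ) (p := x)).pow 2)).mul_const ((R ^ 2)⁻¹)).const_sub 2
  have hψ := ((smoothTransition.contDiff (n := 1)).differentiable (by simp)
    (2 - (x.1 ^ 2 + x.2 ^ 2) * (R ^ 2)⁻¹)).hasDerivAt
  have hcut : cutoff R = smoothTransition ∘ fun y => 2 - (y.1 ^ 2 + y.2 ^ 2) * (R ^ 2)⁻¹ := rfl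
  have hnn : 0 ≤ deriv smoothTransition (2 - (x.1 ^ 2 + x.2 ^ 2) * (R ^ 2)⁻¹) *
      (2 * (x.1 ^ 2 + x.2 ^ 2) * (R ^ 2)⁻¹) :=
    mul_nonneg smoothTransition.monotone.deriv_nonneg (by positivity)
  simp only [advect, pd, hcut, (hψ.comp_hasFDerivAt x hq).fderiv]
  simp only [id_eq, Nat.add_one_sub_one, pow_one, nsmul_eq_mul, Nat.cast_ofNat, smul_add,
    neg_add_rev, smul_neg, add_apply, neg_apply, smul_apply, ContinuousLinearMap.coe_snd',
    smul_eq_mul, mul_zero, neg_zero, ContinuousLinearMap.coe_fst', mul_one, zero_add, mul_neg,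
    add_zero]
  linarith

theorem integrable_cutoff_pow_mul (hR : 0 < R) {k : ℕ} (hk : k ≠ 0) {g : ℝ × ℝ → ℝ}
    (hg : Continuous g) : Integrable (fun x => cutoff R x ^ k * g x) :=
  (((contDiff_cutoff (n := 0) R).continuous.pow k).mul hg).integrable_of_hasCompactSupport
    (hasCompactSupport_pow (hasCompactSupport_cutoff hR) hk).mul_right

theorem integrable_mul_gradSq_cutoff (hR : 0 < R) {g : ℝ × ℝ → ℝ} (hg : Continuous g) :
    Integrable (fun x => g x * gradSq (cutoff R) x) :=
  (hg.mul (continuous_gradSq (contDiff_cutoff (n := 1) R))).integrable_of_hasCompactSupport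
    (hasCompactSupport_gradSq (hasCompactSupport_cutoff hR)).mul_left

theorem cutoff_pow_mul_le (R : ℝ) (k : ℕ) {a : ℝ} (ha : 0 ≤ a) (x : ℝ × ℝ) :
    cutoff R x ^ k * a ≤ a :=
  mul_le_of_le_one_left ha (pow_le_one₀ (cutoff_nonneg R x) (cutoff_le_one R x))

theorem integral_cutoff_pow_mul_le {g : ℝ × ℝ → ℝ} (h0 : 0 ≤ g) (hg : Integrable g) (k : ℕ) :
    ∫ x, cutoff R x ^ k * g x ≤ ∫ x, g x :=
  integral_mono_of_nonneg
    (ae_of_all _ fun x => mul_nonneg (pow_nonneg (cutoff_nonneg R x) k) (h0 x)) hg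
    (ae_of_all _ fun x => cutoff_pow_mul_le R k (h0 x) x)

theorem integral_mul_gradSq_cutoff_le {g : ℝ × ℝ → ℝ} (h0 : 0 ≤ g) (hg : Integrable g) :
    ∫ x, g x * gradSq (cutoff R) x ≤ cutoffGradBound / R ^ 2 * ∫ x, g x := by
  rw [← integral_const_mul]
  refine integral_mono_of_nonneg (ae_of_all _ fun x => mul_nonneg (h0 x) (gradSq_nonneg _ x))
    (hg.const_mul _) (ae_of_all _ fun x => ?_)
  exact (mul_le_mul_of_nonneg_left (gradSq_cutoff_le R x) (h0 x)).trans_eq (mul_comm _ _)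

theorem setIntegral_closedBall_le_integral_cutoff (hR : 0 < R) {k : ℕ} (hk : k ≠ 0)
    {g : ℝ × ℝ → ℝ} (hg : Continuous g) (h0 : 0 ≤ g) :
    ∫ x in Metric.closedBall (0 : ℝ × ℝ) (R / 2), g x ≤ ∫ x, cutoff R x ^ k * g x := by
  have hnn (x : ℝ × ℝ) : 0 ≤ cutoff R x ^ k * g x :=
    mul_nonneg (pow_nonneg (cutoff_nonneg R x) k) (h0 x)
  refine (setIntegral_congr_fun Metric.isClosed_closedBall.measurableSet fun x hx => ?_).trans_le
    (setIntegral_le_integral (integrable_cutoff_pow_mul hR hk hg) (ae_of_all _ hnn))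
  have hx' : ‖x‖ ≤ R / 2 := by simpa using hx
  have h₁ : |x.1| ≤ R / 2 := (norm_fst_le x).trans hx'
  have h₂ : |x.2| ≤ R / 2 := (norm_snd_le x).trans hx'
  have hone : cutoff R x = 1 := cutoff_eq_one hR (by
    nlinarith [sq_abs x.1, sq_abs x.2, abs_nonneg x.1, abs_nonneg x.2])
  simp only [hone, one_pow, one_mul]

theorem integrable_and_integral_le_of_cutoff {g : ℝ × ℝ → ℝ} (hg : Continuous g) (h0 : 0 ≤ g)
    {k : ℕ} (hk : k ≠ 0) {B : ℝ → ℝ} {b : ℝ} (hB : Tendsto B atTop (nhds b))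
    (h : ∀ᶠ R in atTop, ∫ x, cutoff R x ^ k * g x ≤ B R) :
    Integrable g ∧ ∫ x, g x ≤ b := by
  have hcov : AECover (volume : Measure (ℝ × ℝ)) atTop
      (fun R : ℝ => Metric.closedBall (0 : ℝ × ℝ) (R / 2)) :=
    aecover_closedBall (tendsto_id.atTop_div_const (by norm_num))
  have hloc (R : ℝ) : IntegrableOn g (Metric.closedBall (0 : ℝ × ℝ) (R / 2)) :=
    hg.continuousOn.integrableOn_compact (isCompact_closedBall _ _)
  have hle : ∀ᶠ R in atTop, ∫ x in Metric.closedBall (0 : ℝ × ℝ) (R / 2), g x ≤ B R := by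
    filter_upwards [eventually_gt_atTop 0, h] with R hR hBR
    exact (setIntegral_closedBall_le_integral_cutoff hR hk hg h0).trans hBR
  have hgi : Integrable g := by
    refine hcov.integrable_of_integral_bounded_of_nonneg_ae (b + 1) hloc (ae_of_all _ h0) ?_
    filter_upwards [hle, hB.eventually (Iio_mem_nhds (lt_add_one b))] with R h₁ h₂
    exact h₁.trans (le_of_lt h₂)
  exact ⟨hgi, le_of_tendsto_of_tendsto (hcov.integral_tendsto_of_countably_generated hgi) hB hle⟩

end Cutoff

/-! ### Ladyzhenskaya, Nash and Hessian inequalities on the plane -/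

theorem tendsto_const_div_sq_atTop (c : ℝ) : Tendsto (fun R : ℝ => c / R ^ 2) atTop (nhds 0) :=
  tendsto_const_nhds.div_atTop (tendsto_pow_atTop two_ne_zero)

theorem integral_cutoff_pow_mul_norm_pow_four_le {R : ℝ} (hR : 0 < R) {f : ℝ × ℝ → E}
    (hf : ContDiff ℝ 1 f) (k : ℕ) :
    ∫ x, cutoff R x ^ (4 * (k + 1)) * ‖f x‖ ^ 4 ≤
      2 * ladyzhenskayaConst * (∫ x, cutoff R x ^ (2 * (k + 1)) * ‖f x‖ ^ 2) *
        ((∫ x, cutoff R x ^ (2 * (k + 1)) * gradSq f x) +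
          (k + 1) ^ 2 * ∫ x, cutoff R x ^ (2 * k) * ‖f x‖ ^ 2 * gradSq (cutoff R) x) := by
  have h := integral_pow_four_mul_norm_pow_four_le ((contDiff_cutoff (n := 1) R).pow (k + 1))
    (hasCompactSupport_pow (hasCompactSupport_cutoff hR) k.succ_ne_zero) hf
  simp_rw [gradSq_pow (differentiable_cutoff R _), ← pow_mul, mul_comm (k + 1)] at h
  convert h using 3
  rw [← integral_const_mul]
  congr 1 with x
  ring

theorem continuous_norm_pow {E : Type*} [NormedAddCommGroup E] {f : ℝ × ℝ → E}
    (hf : Continuous f) (n : ℕ) : Continuous fun x => ‖f x‖ ^ n :=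
  hf.norm.pow n

theorem integral_cutoff_pow_mul_nonneg (R : ℝ) (k : ℕ) {g : ℝ × ℝ → ℝ} (h0 : 0 ≤ g) :
    0 ≤ ∫ x, cutoff R x ^ k * g x :=
  integral_nonneg fun x => mul_nonneg (pow_nonneg (cutoff_nonneg R x) k) (h0 x)

theorem integral_cutoff_pow_mul_norm_pow_four_le_of_integrable {R : ℝ} (hR : 0 < R)
    {f : ℝ × ℝ → E} (hf : ContDiff ℝ 1 f) {k : ℕ}
    (hi : Integrable fun x => cutoff R x ^ (2 * k) * ‖f x‖ ^ 2) :
    ∫ x, cutoff R x ^ (4 * (k + 1)) * ‖f x‖ ^ 4 ≤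
      2 * ladyzhenskayaConst * (∫ x, cutoff R x ^ (2 * (k + 1)) * ‖f x‖ ^ 2) *
        ((∫ x, cutoff R x ^ (2 * (k + 1)) * gradSq f x) +
          (k + 1) ^ 2 * (cutoffGradBound / R ^ 2 * ∫ x, cutoff R x ^ (2 * k) * ‖f x‖ ^ 2)) := by
  have hK := ladyzhenskayaConst_pos
  have hmass := integral_cutoff_pow_mul_nonneg R (2 * (k + 1)) (g := fun x => ‖f x‖ ^ 2)
    fun x => sq_nonneg _
  have herr := integral_mul_gradSq_cutoff_le (R := R)
    (fun x => mul_nonneg (pow_nonneg (cutoff_nonneg R x) (2 * k)) (sq_nonneg ‖f x‖)) hi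
  refine (integral_cutoff_pow_mul_norm_pow_four_le hR hf k).trans ?_
  gcongr

theorem integrable_and_integral_norm_pow_four_le {f : ℝ × ℝ → E} (hf : ContDiff ℝ 1 f)
    (hf2 : Integrable (fun x => ‖f x‖ ^ 2)) (hgrad : Integrable (gradSq f)) :
    Integrable (fun x => ‖f x‖ ^ 4) ∧
      ∫ x, ‖f x‖ ^ 4 ≤ 2 * ladyzhenskayaConst * (∫ x, ‖f x‖ ^ 2) * ∫ x, gradSq f x := by
  have hK := ladyzhenskayaConst_pos
  have hlim : Tendsto (fun R : ℝ => 2 * ladyzhenskayaConst * (∫ x, ‖f x‖ ^ 2) *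
      ((∫ x, gradSq f x) + cutoffGradBound / R ^ 2 * ∫ x, ‖f x‖ ^ 2)) atTop
      (nhds (2 * ladyzhenskayaConst * (∫ x, ‖f x‖ ^ 2) *
        ((∫ x, gradSq f x) + 0 * ∫ x, ‖f x‖ ^ 2))) :=
    (((tendsto_const_div_sq_atTop _).mul_const _).const_add _).const_mul _
  rw [zero_mul, add_zero] at hlim
  refine integrable_and_integral_le_of_cutoff (continuous_norm_pow hf.continuous 4)
    (fun x => by positivity) four_ne_zero hlim ?_
  filter_upwards [eventually_gt_atTop 0] with R hR
  have h := integral_cutoff_pow_mul_norm_pow_four_le_of_integrable hR hf (k := 0)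
    (by simpa only [mul_zero, pow_zero, one_mul] using hf2)
  simp only [zero_add, mul_one, mul_zero, pow_zero, one_mul, Nat.cast_zero, one_pow] at h
  have hmass_le := integral_cutoff_pow_mul_le (R := R) (fun x => sq_nonneg ‖f x‖) hf2 2
  have hgrad_nonneg := integral_cutoff_pow_mul_nonneg R 2 (gradSq_nonneg f)
  have hgrad_le := integral_cutoff_pow_mul_le (R := R) (gradSq_nonneg f) hgrad 2
  have hc := cutoffGradBound_nonneg
  exact h.trans (by gcongr)

theorem le_sqrt_add_of_sq_le {a e p : ℝ} (ha : 0 ≤ a) (he : 0 ≤ e) (h : p ^ 2 ≤ a + e * p) :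
    p ≤ √a + e := by
  by_contra! hlt
  nlinarith [Real.sq_sqrt ha, Real.sqrt_nonneg a]

theorem sq_integral_cutoff_pow_four_mul_norm_sq_le {R : ℝ} (hR : 0 < R) {f : ℝ × ℝ → E}
    (hf : ContDiff ℝ 1 f) (hf1 : Integrable (fun x => ‖f x‖)) (hgrad : Integrable (gradSq f)) :
    (∫ x, cutoff R x ^ 4 * ‖f x‖ ^ 2) ^ 2 ≤ 2 * ladyzhenskayaConst * (∫ x, ‖f x‖) ^ 2 *
      ((∫ x, gradSq f x) + 9 * (cutoffGradBound / R ^ 2 * ∫ x, cutoff R x ^ 4 * ‖f x‖ ^ 2)) := by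
  set P := ∫ x, cutoff R x ^ 4 * ‖f x‖ ^ 2
  have hK := ladyzhenskayaConst_pos
  have hc := cutoffGradBound_nonneg
  have hG : 0 ≤ ∫ x, gradSq f x := integral_nonneg (gradSq_nonneg f)
  have hP : 0 ≤ P := integral_cutoff_pow_mul_nonneg R 4 fun x => sq_nonneg ‖f x‖
  have hi {k : ℕ} (hk : k ≠ 0) (n : ℕ) : Integrable fun x => cutoff R x ^ k * ‖f x‖ ^ n :=
    integrable_cutoff_pow_mul hR hk (continuous_norm_pow hf.continuous n)
  have jensen : P ^ 3 ≤ (∫ x, ‖f x‖) ^ 2 * ∫ x, cutoff R x ^ 12 * ‖f x‖ ^ 4 := by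
    have hpow (x : ℝ × ℝ) :
        (cutoff R x ^ 4 * ‖f x‖) ^ 3 * ‖f x‖ = cutoff R x ^ 12 * ‖f x‖ ^ 4 := by ring
    have hsq (x : ℝ × ℝ) : cutoff R x ^ 4 * ‖f x‖ * ‖f x‖ = cutoff R x ^ 4 * ‖f x‖ ^ 2 := by ring
    have h := integral_mul_pow_three_le (m := volume) (f := fun x => cutoff R x ^ 4 * ‖f x‖)
      (g := fun x => ‖f x‖) (fun x => by positivity) (fun x => norm_nonneg _) hf1
      (by simpa only [hsq] using hi four_ne_zero 2) (by simpa only [hpow] using hi (by simp) 4)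
    simpa only [hpow, hsq] using h
  have mass_le : ∫ x, cutoff R x ^ 6 * ‖f x‖ ^ 2 ≤ P :=
    integral_mono (hi (by simp) 2) (hi four_ne_zero 2) fun x =>
      mul_le_mul_of_nonneg_right (pow_le_pow_of_le_one (cutoff_nonneg R x)
        (cutoff_le_one R x) (by norm_num)) (by positivity)
  have ladyzhenskaya : ∫ x, cutoff R x ^ 12 * ‖f x‖ ^ 4 ≤ 2 * ladyzhenskayaConst * P *
      ((∫ x, gradSq f x) + 9 * (cutoffGradBound / R ^ 2 * P)) := by
    have h := integral_cutoff_pow_mul_norm_pow_four_le_of_integrable hR hf (k := 2)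
      (hi four_ne_zero 2)
    norm_num at h
    have hgrad_nonneg := integral_cutoff_pow_mul_nonneg R 6 (gradSq_nonneg f)
    have hgrad_le := integral_cutoff_pow_mul_le (R := R) (gradSq_nonneg f) hgrad 6
    exact h.trans (by gcongr)
  rcases hP.eq_or_lt with hP0 | hP0
  · have hzero : P = 0 := hP0.symm
    rw [hzero, zero_pow two_ne_zero]; positivity
  refine le_of_mul_le_mul_right ?_ hP0
  nlinarith [mul_le_mul_of_nonneg_left ladyzhenskaya (sq_nonneg (∫ x, ‖f x‖))]

theorem nash_inequality {f : ℝ × ℝ → E} (hf : ContDiff ℝ 1 f)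
    (hf1 : Integrable (fun x => ‖f x‖)) (hgrad : Integrable (gradSq f)) :
    Integrable (fun x => ‖f x‖ ^ 2) ∧
      (∫ x, ‖f x‖ ^ 2) ^ 2 ≤
        2 * ladyzhenskayaConst * (∫ x, ‖f x‖) ^ 2 * ∫ x, gradSq f x := by
  set A := 2 * ladyzhenskayaConst * (∫ x, ‖f x‖) ^ 2
  have hA : 0 ≤ A := by have := ladyzhenskayaConst_pos; positivity
  have hG : 0 ≤ ∫ x, gradSq f x := integral_nonneg (gradSq_nonneg f)
  have hc := cutoffGradBound_nonneg
  have hlim : Tendsto (fun R : ℝ => √(A * ∫ x, gradSq f x) + A * 9 * (cutoffGradBound / R ^ 2))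
      atTop (nhds (√(A * ∫ x, gradSq f x) + A * 9 * 0)) :=
    ((tendsto_const_div_sq_atTop _).const_mul _).const_add _
  rw [mul_zero, add_zero] at hlim
  obtain ⟨hi, hle⟩ := integrable_and_integral_le_of_cutoff (continuous_norm_pow hf.continuous 2)
    (fun x => by positivity) four_ne_zero hlim (by
      filter_upwards [eventually_gt_atTop 0] with R hR
      refine le_sqrt_add_of_sq_le (by positivity) (by positivity) ?_
      linarith [sq_integral_cutoff_pow_four_mul_norm_sq_le hR hf hf1 hgrad])
  refine ⟨hi, ?_⟩
  calc (∫ x, ‖f x‖ ^ 2) ^ 2 ≤ √(A * ∫ x, gradSq f x) ^ 2 :=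
        pow_le_pow_left₀ (integral_nonneg fun x => by positivity) hle 2
    _ = _ := Real.sq_sqrt (by positivity)

theorem four_mul_pow_three_mul_le {z a b g t : ℝ} (ha : 0 ≤ a) (hb : 0 ≤ b) (hg : 0 ≤ g)
    (h : t ^ 2 ≤ a * b * g) : 4 * z ^ 3 * t ≤ z ^ 4 * b / 2 + 8 * (z ^ 2 * a * g) := by
  have hz : 0 ≤ z ^ 6 := by positivity
  refine le_of_sq_le_sq ?_ (by positivity)
  nlinarith [mul_le_mul_of_nonneg_left h hz, sq_nonneg (z ^ 4 * b / 2 - 8 * (z ^ 2 * a * g))]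

theorem integral_cutoff_sq_mul_gradSq_cutoff_le {R : ℝ} (hR : 0 < R) {a : ℝ × ℝ → ℝ}
    (ha0 : 0 ≤ a) (ha : Continuous a) (hai : Integrable a) :
    ∫ x, cutoff R x ^ 2 * a x * gradSq (cutoff R) x ≤ cutoffGradBound / R ^ 2 * ∫ x, a x := by
  have hc := cutoffGradBound_nonneg
  calc ∫ x, cutoff R x ^ 2 * a x * gradSq (cutoff R) x
      ≤ cutoffGradBound / R ^ 2 * ∫ x, cutoff R x ^ 2 * a x :=
        integral_mul_gradSq_cutoff_le (fun x => mul_nonneg (sq_nonneg _) (ha0 x))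
          (integrable_cutoff_pow_mul hR two_ne_zero ha)
    _ ≤ _ := mul_le_mul_of_nonneg_left (integral_cutoff_pow_mul_le ha0 hai 2) (by positivity)

/-- Caccioppoli's argument: the flux `V` is absorbed by the density `A` that controls it. -/
theorem integral_cutoff_pow_four_mul_le_of_divg {R : ℝ} (hR : 0 < R) {V : ℝ × ℝ → ℝ × ℝ}
    (hV : ContDiff ℝ 1 V) {A B a : ℝ × ℝ → ℝ} (hA : Continuous A) (hB : Continuous B)
    (ha : Continuous a) (hA0 : 0 ≤ A) (ha0 : 0 ≤ a)
    (hle : ∀ x, A x + divg V x ≤ B x) (hflux : ∀ x, (V x).1 ^ 2 + (V x).2 ^ 2 ≤ a x * A x) :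
    ∫ x, cutoff R x ^ 4 * A x ≤ 2 * (∫ x, cutoff R x ^ 4 * B x) +
      16 * ∫ x, cutoff R x ^ 2 * a x * gradSq (cutoff R) x := by
  obtain ⟨hdiv_int, hdiv⟩ := integrable_and_integral_mul_divg_add_advect
    ((contDiff_cutoff (n := 1) R).pow 4)
    (hasCompactSupport_pow (hasCompactSupport_cutoff hR) four_ne_zero) hV
  have hiA := integrable_cutoff_pow_mul hR four_ne_zero hA
  have hiB := (integrable_cutoff_pow_mul hR four_ne_zero hB).const_mul 2
  have hsq : Continuous fun x => cutoff R x ^ 2 * a x :=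
    ((contDiff_cutoff (n := 0) R).continuous.pow 2).mul ha
  have hia := (integrable_mul_gradSq_cutoff hR hsq).const_mul 16
  have pointwise (x : ℝ × ℝ) : cutoff R x ^ 4 * A x +
      2 * (cutoff R x ^ 4 * divg V x + advect V (fun y => cutoff R y ^ 4) x) ≤
      2 * (cutoff R x ^ 4 * B x) + 16 * (cutoff R x ^ 2 * a x * gradSq (cutoff R) x) := by
    have habsorb := four_mul_pow_three_mul_le (z := cutoff R x) (ha0 x) (hA0 x)
      (gradSq_nonneg (cutoff R) x) ((advect_sq_le V (cutoff R) x).trans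
        (mul_le_mul_of_nonneg_right (hflux x) (gradSq_nonneg _ x)))
    rw [advect_pow (differentiable_cutoff R x)]
    norm_num
    nlinarith [mul_le_mul_of_nonneg_left (hle x) (pow_nonneg (cutoff_nonneg R x) 4)]
  have h := integral_mono (hiA.add (hdiv_int.const_mul 2)) (hiB.add hia) pointwise
  rw [integral_add' hiA (hdiv_int.const_mul 2), integral_add' hiB hia, integral_const_mul,
    integral_const_mul, integral_const_mul, hdiv] at h
  linarith

theorem integrable_and_integral_le_of_divg {V : ℝ × ℝ → ℝ × ℝ} (hV : ContDiff ℝ 1 V)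
    {A B a : ℝ × ℝ → ℝ} (hA : Continuous A) (hB : Continuous B) (ha : Continuous a) (hA0 : 0 ≤ A)
    (hB0 : 0 ≤ B) (ha0 : 0 ≤ a) (hle : ∀ x, A x + divg V x ≤ B x)
    (hflux : ∀ x, (V x).1 ^ 2 + (V x).2 ^ 2 ≤ a x * A x) (hBi : Integrable B)
    (hai : Integrable a) : Integrable A ∧ ∫ x, A x ≤ 2 * ∫ x, B x := by
  have hlim : Tendsto (fun R : ℝ => 2 * (∫ x, B x) +
      16 * (cutoffGradBound / R ^ 2 * ∫ x, a x)) atTop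
      (nhds (2 * (∫ x, B x) + 16 * (0 * ∫ x, a x))) :=
    (((tendsto_const_div_sq_atTop _).mul_const _).const_mul _).const_add _
  rw [zero_mul, mul_zero, add_zero] at hlim
  refine integrable_and_integral_le_of_cutoff hA hA0 four_ne_zero hlim ?_
  filter_upwards [eventually_gt_atTop 0] with R hR
  have hB_le := integral_cutoff_pow_mul_le (R := R) hB0 hBi 4
  have ha_le := integral_cutoff_sq_mul_gradSq_cutoff_le hR ha0 ha hai
  linarith [integral_cutoff_pow_four_mul_le_of_divg hR hV hA hB ha hA0 ha0 hle hflux]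

theorem sq_add_inner_le (a b c d : E) :
    (⟪a, b⟫ + ⟪c, d⟫) ^ 2 ≤ (‖a‖ ^ 2 + ‖c‖ ^ 2) * (‖b‖ ^ 2 + ‖d‖ ^ 2) := by
  have h : |⟪a, b⟫ + ⟪c, d⟫| ≤ ‖a‖ * ‖b‖ + ‖c‖ * ‖d‖ :=
    (abs_add_le _ _).trans (add_le_add (abs_real_inner_le_norm a b) (abs_real_inner_le_norm c d))
  have hsq := pow_le_pow_left₀ (abs_nonneg _) h 2
  rw [sq_abs] at hsq
  nlinarith [sq_nonneg (‖a‖ * ‖d‖ - ‖c‖ * ‖b‖)]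

/-- A vector field whose divergence is the difference of the squared Laplacian and the squared
Hessian. -/
noncomputable def hessianFlux (f : ℝ × ℝ → E) (x : ℝ × ℝ) : ℝ × ℝ :=
  (⟪∂₁ f x, ∂₂ (∂₂ f) x⟫ - ⟪∂₂ f x, ∂₁ (∂₂ f) x⟫,
    ⟪∂₂ f x, ∂₁ (∂₁ f) x⟫ - ⟪∂₁ f x, ∂₂ (∂₁ f) x⟫)

theorem contDiff_hessianFlux {f : ℝ × ℝ → E} (hf : ContDiff ℝ 3 f) :
    ContDiff ℝ 1 (hessianFlux f) := by
  have hd (v : ℝ × ℝ) : ContDiff ℝ 2 (partialDeriv v f) := contDiff_partialDeriv hf (by norm_num) v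
  have hd1 (v : ℝ × ℝ) : ContDiff ℝ 1 (partialDeriv v f) := (hd v).of_le (by norm_num)
  have hdd (v w : ℝ × ℝ) : ContDiff ℝ 1 (partialDeriv v (partialDeriv w f)) :=
    contDiff_partialDeriv (hd w) (by norm_num) v
  exact (((hd1 _).inner ℝ (hdd _ _)).sub ((hd1 _).inner ℝ (hdd _ _))).prodMk
    (((hd1 _).inner ℝ (hdd _ _)).sub ((hd1 _).inner ℝ (hdd _ _)))

theorem hessSq_add_divg_hessianFlux {f : ℝ × ℝ → E} (hf : ContDiff ℝ 3 f) (x : ℝ × ℝ) :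
    hessSq f x + divg (hessianFlux f) x = ‖vecLap f x‖ ^ 2 := by
  have hd (v : ℝ × ℝ) : ContDiff ℝ 2 (partialDeriv v f) := contDiff_partialDeriv hf (by norm_num) v
  have hd1 (v : ℝ × ℝ) : DifferentiableAt ℝ (partialDeriv v f) x :=
    (hd v).differentiable (by simp) x
  have hdd (v w : ℝ × ℝ) : DifferentiableAt ℝ (partialDeriv v (partialDeriv w f)) x :=
    differentiable_partialDeriv (hd w) v |>.differentiableAt
  have hi (v w v' : ℝ × ℝ) :
      DifferentiableAt ℝ (fun y => ⟪partialDeriv v f y, partialDeriv w (partialDeriv v' f) y⟫) x :=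
    (hd1 v).inner ℝ (hdd w v')
  simp only [divg, hessianFlux, pd_eq_partialDeriv]
  rw [partialDeriv_sub (hi _ _ _) (hi _ _ _), partialDeriv_sub (hi _ _ _) (hi _ _ _),
    partialDeriv_inner (hd1 _) (hdd _ _), partialDeriv_inner (hd1 _) (hdd _ _),
    partialDeriv_inner (hd1 _) (hdd _ _), partialDeriv_inner (hd1 _) (hdd _ _),
    vecLap, norm_add_sq_real, hessSq, gradSq, gradSq, real_inner_comm (∂₁ (∂₁ f) x),
    partialDeriv_comm (hd (1, 0)) (0, 1) (1, 0),
    partialDeriv_comm (hf.of_le (by norm_num)) (0, 1) (1, 0),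
    partialDeriv_comm (hd (0, 1)) (0, 1) (1, 0), real_inner_self_eq_norm_sq]
  ring

theorem hessianFlux_sq_le (f : ℝ × ℝ → E) (x : ℝ × ℝ) :
    (hessianFlux f x).1 ^ 2 + (hessianFlux f x).2 ^ 2 ≤ gradSq f x * hessSq f x := by
  have h₁ := sq_add_inner_le (∂₁ f x) (∂₂ (∂₂ f) x) (∂₂ f x) (-∂₁ (∂₂ f) x)
  have h₂ := sq_add_inner_le (∂₂ f x) (∂₁ (∂₁ f) x) (∂₁ f x) (-∂₂ (∂₁ f) x)
  simp only [inner_neg_right, norm_neg, ← sub_eq_add_neg] at h₁ h₂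
  simp only [hessianFlux, hessSq, gradSq]
  linarith

theorem integral_cutoff_pow_four_mul_hessSq_le {R : ℝ} (hR : 0 < R) {f : ℝ × ℝ → E}
    (hf : ContDiff ℝ 3 f) (hgrad : Integrable (gradSq f)) :
    ∫ x, cutoff R x ^ 4 * hessSq f x ≤ 2 * (∫ x, cutoff R x ^ 4 * ‖vecLap f x‖ ^ 2) +
      16 * (cutoffGradBound / R ^ 2 * ∫ x, gradSq f x) := by
  have hf2 : ContDiff ℝ 2 f := hf.of_le (by norm_num)
  have hcont : Continuous (gradSq f) := continuous_gradSq (hf.of_le (by norm_num))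
  have h := integral_cutoff_pow_four_mul_le_of_divg hR (contDiff_hessianFlux hf)
    (continuous_hessSq hf2) (continuous_norm_pow (continuous_vecLap hf2) 2) hcont
    (hessSq_nonneg f) (gradSq_nonneg f) (fun x => (hessSq_add_divg_hessianFlux hf x).le)
    (hessianFlux_sq_le f)
  linarith [integral_cutoff_sq_mul_gradSq_cutoff_le hR (gradSq_nonneg f) hcont hgrad]

theorem integrable_and_integral_hessSq_le {f : ℝ × ℝ → E} (hf : ContDiff ℝ 3 f)
    (hgrad : Integrable (gradSq f)) (hlap : Integrable fun x => ‖vecLap f x‖ ^ 2) :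
    Integrable (hessSq f) ∧ ∫ x, hessSq f x ≤ 2 * ∫ x, ‖vecLap f x‖ ^ 2 :=
  have hf2 : ContDiff ℝ 2 f := hf.of_le (by norm_num)
  integrable_and_integral_le_of_divg (contDiff_hessianFlux hf) (continuous_hessSq hf2)
    (continuous_norm_pow (continuous_vecLap hf2) 2) (continuous_gradSq (hf.of_le (by norm_num)))
    (hessSq_nonneg f) (fun x => sq_nonneg _) (gradSq_nonneg f)
    (fun x => (hessSq_add_divg_hessianFlux hf x).le) (hessianFlux_sq_le f) hlap hgrad

/-- The vector field `f · ∇f`, half the gradient of `‖f‖ ^ 2`. -/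
noncomputable def gradientFlux (f : ℝ × ℝ → E) (x : ℝ × ℝ) : ℝ × ℝ :=
  (⟪f x, ∂₁ f x⟫, ⟪f x, ∂₂ f x⟫)

theorem contDiff_gradientFlux {f : ℝ × ℝ → E} (hf : ContDiff ℝ 2 f) :
    ContDiff ℝ 1 (gradientFlux f) :=
  have hf1 : ContDiff ℝ 1 f := hf.of_le (by norm_num)
  (hf1.inner ℝ (contDiff_partialDeriv hf (by norm_num) _)).prodMk
    (hf1.inner ℝ (contDiff_partialDeriv hf (by norm_num) _))

theorem divg_gradientFlux {f : ℝ × ℝ → E} (hf : ContDiff ℝ 2 f) (x : ℝ × ℝ) :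
    divg (gradientFlux f) x = gradSq f x + ⟪f x, vecLap f x⟫ := by
  have hd (v : ℝ × ℝ) := (differentiable_partialDeriv hf v).differentiableAt (x := x)
  have hf1 := (hf.differentiable (by simp)).differentiableAt (x := x)
  simp only [divg, gradientFlux, pd_eq_partialDeriv]
  rw [partialDeriv_inner hf1 (hd _), partialDeriv_inner hf1 (hd _), real_inner_self_eq_norm_sq,
    real_inner_self_eq_norm_sq, vecLap, inner_add_right, gradSq]
  ring

theorem gradientFlux_sq_le (f : ℝ × ℝ → E) (x : ℝ × ℝ) :
    (gradientFlux f x).1 ^ 2 + (gradientFlux f x).2 ^ 2 ≤ ‖f x‖ ^ 2 * gradSq f x := by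
  have h (v : ℝ × ℝ) : ⟪f x, partialDeriv v f x⟫ ^ 2 ≤ (‖f x‖ * ‖partialDeriv v f x‖) ^ 2 :=
    sq_le_sq.2 ((abs_real_inner_le_norm _ _).trans (le_abs_self _))
  simp only [gradientFlux, gradSq]
  linarith [h (1, 0), h (0, 1)]

theorem divg_neg (V : ℝ × ℝ → ℝ × ℝ) (x : ℝ × ℝ) : divg (fun y => -V y) x = -divg V x := by
  simp only [divg, pd, Prod.fst_neg, Prod.snd_neg, fderiv_fun_neg, neg_apply, neg_add]

theorem integral_cutoff_pow_four_mul_gradSq_le {R : ℝ} (hR : 0 < R) {f : ℝ × ℝ → E}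
    (hf : ContDiff ℝ 2 f) (hf2 : Integrable fun x => ‖f x‖ ^ 2) :
    ∫ x, cutoff R x ^ 4 * gradSq f x ≤ 2 * (∫ x, cutoff R x ^ 4 * -⟪f x, vecLap f x⟫) +
      16 * (cutoffGradBound / R ^ 2 * ∫ x, ‖f x‖ ^ 2) := by
  have hfc : Continuous fun x => ‖f x‖ ^ 2 := continuous_norm_pow hf.continuous 2
  have hsource : Continuous fun x => -⟪f x, vecLap f x⟫ :=
    (hf.continuous.inner (continuous_vecLap hf)).neg
  have h := integral_cutoff_pow_four_mul_le_of_divg hR (contDiff_gradientFlux hf).neg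
    (continuous_gradSq (hf.of_le (by norm_num))) hsource hfc (gradSq_nonneg f)
    (fun x => sq_nonneg _) (fun x => by rw [divg_neg, divg_gradientFlux hf]; linarith)
    (fun x => by simpa using gradientFlux_sq_le f x)
  linarith [integral_cutoff_sq_mul_gradSq_cutoff_le hR (fun x => sq_nonneg ‖f x‖) hfc hf2]

theorem sq_integral_gradSq_le {f : ℝ × ℝ → E} (hf : ContDiff ℝ 2 f)
    (hf2 : Integrable fun x => ‖f x‖ ^ 2) (hlap : Integrable fun x => ‖vecLap f x‖ ^ 2) :
    (∫ x, gradSq f x) ^ 2 ≤ 4 * ((∫ x, ‖f x‖ ^ 2) * ∫ x, ‖vecLap f x‖ ^ 2) := by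
  have hfc : Continuous fun x => ‖f x‖ := hf.continuous.norm
  have hlc : Continuous fun x => ‖vecLap f x‖ := (continuous_vecLap hf).norm
  have hle (x : ℝ × ℝ) :
      gradSq f x + divg (fun y => -gradientFlux f y) x ≤ ‖f x‖ * ‖vecLap f x‖ := by
    rw [divg_neg, divg_gradientFlux hf]
    linarith [neg_le_of_abs_le (abs_real_inner_le_norm (f x) (vecLap f x))]
  obtain ⟨-, h⟩ := integrable_and_integral_le_of_divg (contDiff_gradientFlux hf).neg
    (continuous_gradSq (hf.of_le (by norm_num))) (hfc.mul hlc) (hfc.pow 2) (gradSq_nonneg f)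
    (fun x => mul_nonneg (norm_nonneg _) (norm_nonneg _)) (fun x => sq_nonneg _) hle
    (fun x => by simpa using gradientFlux_sq_le f x)
    (integrable_mul_of_sq hfc.aestronglyMeasurable hlc.aestronglyMeasurable hf2 hlap) hf2
  calc (∫ x, gradSq f x) ^ 2 ≤ (2 * ∫ x, ‖f x‖ * ‖vecLap f x‖) ^ 2 :=
        pow_le_pow_left₀ (integral_nonneg (gradSq_nonneg f)) h 2
    _ = 4 * (∫ x, ‖f x‖ * ‖vecLap f x‖) ^ 2 := by ring
    _ ≤ _ := by
        gcongr
        exact sq_integral_mul_le hfc.aestronglyMeasurable hlc.aestronglyMeasurable hf2 hlap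

theorem integral_gradSq_pow_three_le {f : ℝ × ℝ → E} (hf : ContDiff ℝ 2 f)
    (hf1 : Integrable fun x => ‖f x‖) (hgrad : Integrable (gradSq f))
    (hhess : Integrable (hessSq f)) :
    (∫ x, gradSq f x) ^ 3 ≤
      128 * ladyzhenskayaConst * (∫ x, ‖f x‖) ^ 2 * (∫ x, hessSq f x) ^ 2 := by
  have hcont : Continuous fun x => ‖vecLap f x‖ ^ 2 := continuous_norm_pow (continuous_vecLap hf) 2
  have hlap : Integrable fun x => ‖vecLap f x‖ ^ 2 :=
    (hhess.const_mul 2).mono' hcont.aestronglyMeasurable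
      (ae_of_all _ fun x => by simpa using norm_vecLap_sq_le f x)
  have hlap_le : ∫ x, ‖vecLap f x‖ ^ 2 ≤ 2 * ∫ x, hessSq f x := by
    rw [← integral_const_mul]
    exact integral_mono hlap (hhess.const_mul 2) (norm_vecLap_sq_le f)
  obtain ⟨hf2, nash⟩ := nash_inequality (hf.of_le (by norm_num)) hf1 hgrad
  have interpolation := sq_integral_gradSq_le hf hf2 hlap
  set G := ∫ x, gradSq f x
  set L := ∫ x, ‖vecLap f x‖ ^ 2
  set M := ∫ x, ‖f x‖ ^ 2
  have hG : 0 ≤ G := integral_nonneg (gradSq_nonneg f)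
  have hK := ladyzhenskayaConst_pos
  rcases hG.eq_or_lt with hzero | hpos
  · rw [← hzero, zero_pow three_ne_zero]; positivity
  refine le_of_mul_le_mul_right ?_ hpos
  calc G ^ 3 * G = (G ^ 2) ^ 2 := by ring
    _ ≤ (4 * (M * L)) ^ 2 := by gcongr
    _ = 16 * L ^ 2 * M ^ 2 := by ring
    _ ≤ 16 * (2 * ∫ x, hessSq f x) ^ 2 * (2 * ladyzhenskayaConst * (∫ x, ‖f x‖) ^ 2 * G) := by
        gcongr
    _ = _ := by ring

/-! ### Growth of functions with finite Dirichlet energy -/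

/-- The weight `(1 + |x| ^ 2) ^ (-5 / 4)` of a Hardy inequality. The exponent lies between `-3 / 2`
and `-1`, so that `x • hardyWeight x` has negative divergence at infinity while the weighted bound
still makes the `L⁴` mass on balls of radius `R` grow slower than `R ^ 4`. -/
noncomputable def hardyWeight (x : ℝ × ℝ) : ℝ :=
  (1 + x.1 ^ 2 + x.2 ^ 2) ^ (-(5 / 4) : ℝ)

theorem hardyWeight_pos (x : ℝ × ℝ) : 0 < hardyWeight x := by
  unfold hardyWeight; positivity

theorem contDiff_hardyWeight {n : ℕ∞ω} : ContDiff ℝ n hardyWeight :=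
  ContDiff.rpow_const_of_ne (by fun_prop) fun x => by positivity

theorem mul_hardyWeight_le_one (x : ℝ × ℝ) : (1 + x.1 ^ 2 + x.2 ^ 2) * hardyWeight x ≤ 1 := by
  have hρ : 0 < 1 + x.1 ^ 2 + x.2 ^ 2 := by positivity
  rw [hardyWeight, ← Real.rpow_one_add' hρ.le (by norm_num)]
  exact Real.rpow_le_one_of_one_le_of_nonpos (by nlinarith [sq_nonneg x.1, sq_nonneg x.2])
    (by norm_num)

theorem hardyWeight_le_one (x : ℝ × ℝ) : hardyWeight x ≤ 1 :=
  Real.rpow_le_one_of_one_le_of_nonpos (by nlinarith [sq_nonneg x.1, sq_nonneg x.2]) (by norm_num)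

theorem one_le_mul_hardyWeight {R : ℝ} (hR : 1 ≤ R) {x : ℝ × ℝ}
    (hx : x.1 ^ 2 + x.2 ^ 2 ≤ 2 * R ^ 2) : 1 ≤ 4 * (R ^ 2 * √R) * hardyWeight x := by
  have hρ : 0 < 1 + x.1 ^ 2 + x.2 ^ 2 := by positivity
  have hR0 : 0 ≤ R := by linarith
  rw [hardyWeight, Real.rpow_neg hρ.le, ← div_eq_mul_inv, one_le_div (by positivity)]
  refine le_of_pow_le_pow_left₀ four_ne_zero (by positivity) ?_
  calc ((1 + x.1 ^ 2 + x.2 ^ 2) ^ (5 / 4 : ℝ)) ^ 4 = (1 + x.1 ^ 2 + x.2 ^ 2) ^ 5 := by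
        rw [← Real.rpow_natCast, ← Real.rpow_mul hρ.le, ← Real.rpow_natCast]; norm_num
    _ ≤ (3 * R ^ 2) ^ 5 := pow_le_pow_left₀ hρ.le (by nlinarith) 5
    _ ≤ 4 ^ 4 * R ^ 8 * (√R ^ 2) ^ 2 := by
        rw [Real.sq_sqrt hR0]; nlinarith [pow_nonneg hR0 10]
    _ = (4 * (R ^ 2 * √R)) ^ 4 := by ring

theorem advect_mul {φ ψ : ℝ × ℝ → ℝ} {x : ℝ × ℝ} (hφ : DifferentiableAt ℝ φ x)
    (hψ : DifferentiableAt ℝ ψ x) (V : ℝ × ℝ → ℝ × ℝ) :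
    advect V (fun y => φ y * ψ y) x = φ x * advect V ψ x + advect V φ x * ψ x := by
  simp only [advect, pd_eq_partialDeriv, partialDeriv_mul hφ hψ]
  ring

theorem divg_id (x : ℝ × ℝ) : divg id x = 2 := by
  norm_num [divg, pd, fderiv_fst, fderiv_snd]

theorem advect_id_hardyWeight (x : ℝ × ℝ) :
    advect id hardyWeight x =
      -(5 / 2) * hardyWeight x + 5 / 2 * (hardyWeight x / (1 + x.1 ^ 2 + x.2 ^ 2)) := by
  have hρ : 0 < 1 + x.1 ^ 2 + x.2 ^ 2 := by positivity
  have hd : HasFDerivAt (fun y : ℝ × ℝ => 1 + y.1 ^ 2 + y.2 ^ 2)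
      ((2 * x.1) • ContinuousLinearMap.fst ℝ ℝ ℝ + (2 * x.2) • ContinuousLinearMap.snd ℝ ℝ ℝ)
      x := by
    simpa using ((hasFDerivAt_fst (𝕜 := ℝ) (p := x)).pow 2 |>.const_add 1).fun_add
      ((hasFDerivAt_snd (𝕜 := ℝ) (p := x)).pow 2)
  have hq := (hd.rpow_const (p := -(5 / 4)) (Or.inl hρ.ne')).fderiv
  have hpow : (1 + x.1 ^ 2 + x.2 ^ 2) ^ (-(5 / 4) - 1 : ℝ) =
      hardyWeight x / (1 + x.1 ^ 2 + x.2 ^ 2) := by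
    rw [Real.rpow_sub_one hρ.ne', hardyWeight]
  rw [hpow] at hq
  change x.1 * fderiv ℝ hardyWeight x (1, 0) + x.2 * fderiv ℝ hardyWeight x (0, 1) = _
  rw [show fderiv ℝ hardyWeight x = _ from hq]
  simp only [smul_add, add_apply, smul_apply, ContinuousLinearMap.coe_fst', smul_eq_mul, mul_one,
    ContinuousLinearMap.coe_snd', mul_zero, add_zero, zero_add]
  field_simp
  ring

theorem advect_id_norm_sq_sq_le {f : ℝ × ℝ → E} {x : ℝ × ℝ} (hf : DifferentiableAt ℝ f x) :
    advect id (fun y => ‖f y‖ ^ 2) x ^ 2 ≤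
      (x.1 ^ 2 + x.2 ^ 2) * (4 * (‖f x‖ ^ 2 * gradSq f x)) := by
  refine (advect_sq_le _ _ x).trans (mul_le_mul_of_nonneg_left ?_ (by positivity))
  rw [gradSq, partialDeriv_norm_sq hf, partialDeriv_norm_sq hf]
  have h := gradientFlux_sq_le f x
  simp only [gradientFlux] at h
  simp only [norm_mul, mul_pow, Real.norm_eq_abs, sq_abs]
  linarith

/-- The radial vector field behind the Hardy inequality. -/
noncomputable def hardyField (f : ℝ × ℝ → E) (x : ℝ × ℝ) : ℝ × ℝ :=
  (‖f x‖ ^ 2 * hardyWeight x) • x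

theorem contDiff_hardyField {f : ℝ × ℝ → E} (hf : ContDiff ℝ 1 f) : ContDiff ℝ 1 (hardyField f) :=
  ((hf.norm_sq ℝ).mul contDiff_hardyWeight).smul contDiff_id

theorem divg_hardyField {f : ℝ × ℝ → E} {x : ℝ × ℝ} (hf : DifferentiableAt ℝ f x) :
    divg (hardyField f) x = hardyWeight x * advect id (fun y => ‖f y‖ ^ 2) x +
      ‖f x‖ ^ 2 * hardyWeight x * (5 / 2 * (1 + x.1 ^ 2 + x.2 ^ 2)⁻¹ - 1 / 2) := by
  have hq : DifferentiableAt ℝ hardyWeight x := contDiff_hardyWeight.differentiable one_ne_zero x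
  have hf2 : DifferentiableAt ℝ (fun y => ‖f y‖ ^ 2) x := hf.norm_sq ℝ
  have h : divg (hardyField f) x = ‖f x‖ ^ 2 * hardyWeight x * divg id x +
      advect id (fun y => ‖f y‖ ^ 2 * hardyWeight y) x :=
    divg_smul (hf2.mul hq) differentiableAt_id
  rw [h, divg_id, advect_mul hf2 hq, advect_id_hardyWeight]
  ring

theorem hardyWeight_mul_advect_le {f : ℝ × ℝ → E} {x : ℝ × ℝ} (hf : DifferentiableAt ℝ f x) :
    hardyWeight x * advect id (fun y => ‖f y‖ ^ 2) x ≤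
      hardyWeight x * ‖f x‖ ^ 2 / 8 + 8 * gradSq f x := by
  have hq := hardyWeight_pos x
  have hG := gradSq_nonneg f x
  refine le_of_sq_le_sq ?_ (by positivity)
  have hρ : hardyWeight x * (x.1 ^ 2 + x.2 ^ 2) ≤ 1 := by linarith [mul_hardyWeight_le_one x]
  calc (hardyWeight x * advect id (fun y => ‖f y‖ ^ 2) x) ^ 2
      ≤ hardyWeight x ^ 2 * ((x.1 ^ 2 + x.2 ^ 2) * (4 * (‖f x‖ ^ 2 * gradSq f x))) := by
        rw [mul_pow]; gcongr; exact advect_id_norm_sq_sq_le hf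
    _ = hardyWeight x * (x.1 ^ 2 + x.2 ^ 2) * (4 * (hardyWeight x * ‖f x‖ ^ 2 * gradSq f x)) := by
        ring
    _ ≤ 4 * (hardyWeight x * ‖f x‖ ^ 2 * gradSq f x) := mul_le_of_le_one_left (by positivity) hρ
    _ ≤ _ := by nlinarith [sq_nonneg (hardyWeight x * ‖f x‖ ^ 2 / 8 - 8 * gradSq f x)]

theorem hardyWeight_mul_inv_le (x : ℝ × ℝ) :
    hardyWeight x * (5 / 2 * (1 + x.1 ^ 2 + x.2 ^ 2)⁻¹) ≤
      hardyWeight x / 8 + 5 / 2 * cutoff 5 x := by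
  have hq := hardyWeight_pos x
  rcases le_total (x.1 ^ 2 + x.2 ^ 2) 25 with hx | hx
  · rw [cutoff_eq_one (by norm_num) (by linarith)]
    have hρ : (1 + x.1 ^ 2 + x.2 ^ 2)⁻¹ ≤ 1 := inv_le_one_of_one_le₀ (by nlinarith)
    nlinarith [mul_le_mul_of_nonneg_left hρ hq.le, hardyWeight_le_one x]
  · have hρ : (1 + x.1 ^ 2 + x.2 ^ 2)⁻¹ ≤ 1 / 20 := by
      rw [← one_div]; exact one_div_le_one_div_of_le (by norm_num) (by linarith)
    nlinarith [mul_le_mul_of_nonneg_left hρ hq.le, cutoff_nonneg 5 x]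

theorem hardyWeight_mul_norm_sq_le {f : ℝ × ℝ → E} {x : ℝ × ℝ} (hf : DifferentiableAt ℝ f x) :
    hardyWeight x * ‖f x‖ ^ 2 ≤
      -4 * divg (hardyField f) x + 32 * gradSq f x + 10 * (cutoff 5 x * ‖f x‖ ^ 2) := by
  rw [divg_hardyField hf]
  linarith [hardyWeight_mul_advect_le hf,
    mul_le_mul_of_nonneg_right (hardyWeight_mul_inv_le x) (sq_nonneg ‖f x‖)]

theorem advect_hardyField_cutoff_nonpos {E : Type*} [NormedAddCommGroup E] (f : ℝ × ℝ → E)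
    (R : ℝ) (x : ℝ × ℝ) : advect (hardyField f) (cutoff R) x ≤ 0 := by
  have h : advect (hardyField f) (cutoff R) x =
      ‖f x‖ ^ 2 * hardyWeight x * advect id (cutoff R) x := by
    simp only [advect, hardyField, Prod.smul_fst, Prod.smul_snd, smul_eq_mul, id]
    ring
  rw [h]
  exact mul_nonpos_of_nonneg_of_nonpos
    (mul_nonneg (sq_nonneg _) (hardyWeight_pos x).le) (advect_id_cutoff_nonpos R x)

theorem integrable_hardyWeight_mul_norm_sq {f : ℝ × ℝ → E} (hf : ContDiff ℝ 1 f)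
    (hgrad : Integrable (gradSq f)) : Integrable fun x => hardyWeight x * ‖f x‖ ^ 2 := by
  have hlocal : Integrable fun x => cutoff 5 x * ‖f x‖ ^ 2 := by
    simpa only [pow_one] using integrable_cutoff_pow_mul (R := 5) (by norm_num) one_ne_zero
      (continuous_norm_pow hf.continuous 2)
  have hbound := (hgrad.const_mul 32).add (hlocal.const_mul 10)
  refine (integrable_and_integral_le_of_cutoff
    (contDiff_hardyWeight (n := 0).continuous.mul (continuous_norm_pow hf.continuous 2))
    (fun x => mul_nonneg (hardyWeight_pos x).le (sq_nonneg _)) one_ne_zero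
    (tendsto_const_nhds (x := ∫ x, (32 * gradSq f x + 10 * (cutoff 5 x * ‖f x‖ ^ 2)))) ?_).1
  filter_upwards [eventually_gt_atTop 0] with R hR
  obtain ⟨hdiv_int, hdiv⟩ := integrable_and_integral_mul_divg_add_advect
    (contDiff_cutoff (n := 1) R) (hasCompactSupport_cutoff hR) (contDiff_hardyField hf)
  have pointwise (x : ℝ × ℝ) : cutoff R x ^ 1 * (hardyWeight x * ‖f x‖ ^ 2) ≤
      -4 * (cutoff R x * divg (hardyField f) x + advect (hardyField f) (cutoff R) x) +
        (32 * gradSq f x + 10 * (cutoff 5 x * ‖f x‖ ^ 2)) := by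
    have hmul := mul_le_mul_of_nonneg_left
      (hardyWeight_mul_norm_sq_le (hf.differentiable one_ne_zero x)) (cutoff_nonneg R x)
    have hG := gradSq_nonneg f x
    have hζ := cutoff_nonneg 5 x
    have hdrop : cutoff R x ^ 1 * (32 * gradSq f x + 10 * (cutoff 5 x * ‖f x‖ ^ 2)) ≤ _ :=
      cutoff_pow_mul_le R 1 (by positivity) x
    rw [pow_one] at hdrop ⊢
    linarith [advect_hardyField_cutoff_nonpos f R x]
  have h := integral_mono (integrable_cutoff_pow_mul hR one_ne_zero
    (contDiff_hardyWeight (n := 0).continuous.mul (continuous_norm_pow hf.continuous 2)))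
    ((hdiv_int.const_mul (-4)).add hbound) pointwise
  rwa [integral_add' (hdiv_int.const_mul (-4)) hbound, integral_const_mul, hdiv, mul_zero,
    zero_add] at h

theorem integral_cutoff_sq_mul_norm_sq_le {E : Type*} [NormedAddCommGroup E] {R : ℝ} (hR : 1 ≤ R)
    {f : ℝ × ℝ → E} (hf : Continuous f)
    (hweight : Integrable fun x => hardyWeight x * ‖f x‖ ^ 2) :
    ∫ x, cutoff R x ^ 2 * ‖f x‖ ^ 2 ≤
      4 * (R ^ 2 * √R) * ∫ x, hardyWeight x * ‖f x‖ ^ 2 := by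
  have hR0 : 0 < R := by linarith
  rw [← integral_const_mul]
  refine integral_mono (integrable_cutoff_pow_mul hR0 two_ne_zero (continuous_norm_pow hf 2))
    (hweight.const_mul _) fun x => ?_
  rcases le_total (2 * R ^ 2) (x.1 ^ 2 + x.2 ^ 2) with hx | hx
  · have := hardyWeight_pos x
    simp only [cutoff_eq_zero hR0 hx, zero_pow two_ne_zero, zero_mul]
    positivity
  · calc cutoff R x ^ 2 * ‖f x‖ ^ 2 ≤ 1 * ‖f x‖ ^ 2 := by
          rw [one_mul]; exact cutoff_pow_mul_le R 2 (sq_nonneg _) x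
      _ ≤ 4 * (R ^ 2 * √R) * hardyWeight x * ‖f x‖ ^ 2 := by
          gcongr; exact one_le_mul_hardyWeight hR hx
      _ = _ := by ring

theorem integral_norm_sq_mul_gradSq_cutoff_le {E : Type*} [NormedAddCommGroup E] {R : ℝ}
    (hR : 1 ≤ R) {f : ℝ × ℝ → E} (hf : Continuous f)
    (hweight : Integrable fun x => hardyWeight x * ‖f x‖ ^ 2) :
    ∫ x, ‖f x‖ ^ 2 * gradSq (cutoff R) x ≤
      4 * √R * cutoffGradBound * ∫ x, hardyWeight x * ‖f x‖ ^ 2 := by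
  have hR0 : 0 < R := by linarith
  have hc := cutoffGradBound_nonneg
  rw [← integral_const_mul]
  refine integral_mono (integrable_mul_gradSq_cutoff hR0 (continuous_norm_pow hf 2))
    (hweight.const_mul _) fun x => ?_
  have hq := hardyWeight_pos x
  rcases lt_or_ge (2 * R ^ 2) (x.1 ^ 2 + x.2 ^ 2) with hx | hx
  · simp only [gradSq_cutoff_eq_zero hR0 hx, mul_zero]
    positivity
  · calc ‖f x‖ ^ 2 * gradSq (cutoff R) x
        ≤ ‖f x‖ ^ 2 * (4 * (R ^ 2 * √R) * hardyWeight x) * (cutoffGradBound / R ^ 2) :=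
          mul_le_mul (le_mul_of_one_le_right (sq_nonneg _) (one_le_mul_hardyWeight hR hx))
            (gradSq_cutoff_le R x) (gradSq_nonneg _ x) (by positivity)
      _ = 4 * √R * cutoffGradBound * (hardyWeight x * ‖f x‖ ^ 2) := by field_simp

theorem exists_integral_cutoff_pow_four_mul_norm_pow_four_le {f : ℝ × ℝ → E}
    (hf : ContDiff ℝ 1 f) (hgrad : Integrable (gradSq f)) :
    ∃ M, ∀ R, 1 ≤ R → ∫ x, cutoff R x ^ 4 * ‖f x‖ ^ 4 ≤ M * R ^ 3 := by
  have hweight := integrable_hardyWeight_mul_norm_sq hf hgrad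
  have hK := ladyzhenskayaConst_pos
  have hH : 0 ≤ ∫ x, hardyWeight x * ‖f x‖ ^ 2 :=
    integral_nonneg fun x => mul_nonneg (hardyWeight_pos x).le (sq_nonneg _)
  have hG : 0 ≤ ∫ x, gradSq f x := integral_nonneg (gradSq_nonneg f)
  refine ⟨8 * ladyzhenskayaConst * (∫ x, hardyWeight x * ‖f x‖ ^ 2) * ((∫ x, gradSq f x) +
    4 * cutoffGradBound * ∫ x, hardyWeight x * ‖f x‖ ^ 2), fun R hR => ?_⟩
  have hR0 : 0 < R := by linarith
  have mass_le := integral_cutoff_sq_mul_norm_sq_le hR hf.continuous hweight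
  have error_le := integral_norm_sq_mul_gradSq_cutoff_le hR hf.continuous hweight
  have grad_le := integral_cutoff_pow_mul_le (R := R) (gradSq_nonneg f) hgrad 2
  have herr : 0 ≤ ∫ x, ‖f x‖ ^ 2 * gradSq (cutoff R) x :=
    integral_nonneg fun x => mul_nonneg (sq_nonneg _) (gradSq_nonneg _ x)
  have hgrad0 := integral_cutoff_pow_mul_nonneg R 2 (gradSq_nonneg f)
  have h := integral_cutoff_pow_mul_norm_pow_four_le hR0 hf 0
  simp only [zero_add, mul_one, mul_zero, pow_zero, one_mul, Nat.cast_zero, one_pow] at h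
  set H := ∫ x, hardyWeight x * ‖f x‖ ^ 2
  set G := ∫ x, gradSq f x
  calc ∫ x, cutoff R x ^ 4 * ‖f x‖ ^ 4
      ≤ 2 * ladyzhenskayaConst * (4 * (R ^ 2 * √R) * H) * (G + 4 * √R * cutoffGradBound * H) :=
        h.trans (by gcongr)
    _ ≤ 2 * ladyzhenskayaConst * (4 * (R ^ 2 * √R) * H) *
        (√R * G + 4 * √R * cutoffGradBound * H) := by
        gcongr
        exact le_mul_of_one_le_left hG (Real.one_le_sqrt.2 hR)
    _ = 8 * ladyzhenskayaConst * H * (G + 4 * cutoffGradBound * H) * (R ^ 2 * √R ^ 2) := by ring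
    _ = _ := by rw [Real.sq_sqrt hR0.le]; ring

theorem eq_of_integral_gradSq_eq_zero {f : ℝ × ℝ → E} (hf : ContDiff ℝ 1 f)
    (hgrad : Integrable (gradSq f)) (hzero : ∫ x, gradSq f x = 0) (x y : ℝ × ℝ) : f x = f y := by
  have hae : gradSq f =ᵐ[volume] 0 :=
    (integral_eq_zero_iff_of_nonneg (gradSq_nonneg f) hgrad).1 hzero
  have hgrad0 : gradSq f = 0 := ((continuous_gradSq hf).ae_eq_iff_eq volume continuous_const).1 hae
  refine is_const_of_fderiv_eq_zero (hf.differentiable one_ne_zero) (fun z => ?_) x y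
  have h := norm_fderiv_sq_le f z
  rw [hgrad0, Pi.zero_apply, mul_zero] at h
  exact norm_eq_zero.1 (pow_eq_zero_iff two_ne_zero |>.1 (le_antisymm h (sq_nonneg _)))

theorem eq_zero_of_integrable_const {c : ℝ} (h : Integrable fun _ : ℝ × ℝ => c) : c = 0 := by
  rw [integrable_const_iff] at h
  refine h.resolve_right fun hfin => ?_
  exact hfin.measure_univ_lt_top.ne (measure_univ_of_isAddLeftInvariant _)

theorem eq_of_integral_hessSq_eq_zero {f : ℝ × ℝ → E} (hf : ContDiff ℝ 2 f)
    (hgrad : Integrable (gradSq f)) (hhess : Integrable (hessSq f))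
    (hzero : ∫ x, hessSq f x = 0) (x y : ℝ × ℝ) : f x = f y := by
  have hgrad_eq : gradSq (grad f) = hessSq f := funext (gradSq_grad hf)
  have hconst (z : ℝ × ℝ) : gradSq f z = gradSq f 0 := by
    rw [← norm_sq_grad, ← norm_sq_grad, eq_of_integral_gradSq_eq_zero
      (contDiff_grad hf (by norm_num)) (by rwa [hgrad_eq]) (by rwa [hgrad_eq]) z 0]
  have hgrad0 : gradSq f 0 = 0 :=
    eq_zero_of_integrable_const (hgrad.congr (ae_of_all _ hconst))
  exact eq_of_integral_gradSq_eq_zero (hf.of_le (by norm_num)) hgrad (by simp [hconst, hgrad0]) x y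

/-! ### The vorticity formulation -/

section Vorticity

variable {n m : ℕ∞ω} {v w p : ℝ × ℝ → ℝ × ℝ} {x : ℝ × ℝ}

theorem partialDeriv_fst (hv : DifferentiableAt ℝ v x) (a : ℝ × ℝ) :
    partialDeriv a (fun y => (v y).1) x = (partialDeriv a v x).1 := by
  rw [partialDeriv, fderiv.fst hv]
  rfl

theorem partialDeriv_snd (hv : DifferentiableAt ℝ v x) (a : ℝ × ℝ) :
    partialDeriv a (fun y => (v y).2) x = (partialDeriv a v x).2 := by
  rw [partialDeriv, fderiv.snd hv]
  rfl

theorem contDiff_vort (hv : ContDiff ℝ n v) (hmn : m + 1 ≤ n) : ContDiff ℝ m (vort v) :=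
  (contDiff_partialDeriv hv.fst hmn _).sub (contDiff_partialDeriv hv.snd hmn _)

theorem vort_add (hv : DifferentiableAt ℝ v x) (hw : DifferentiableAt ℝ w x) :
    vort (fun y => v y + w y) x = vort v x + vort w x := by
  simp only [vort, pd_eq_partialDeriv, Prod.fst_add, Prod.snd_add, partialDeriv_add hv.fst hw.fst,
    partialDeriv_add hv.snd hw.snd]
  ring

theorem vort_sub (hv : DifferentiableAt ℝ v x) (hw : DifferentiableAt ℝ w x) :
    vort (fun y => v y - w y) x = vort v x - vort w x := by
  simp only [vort, pd_eq_partialDeriv, Prod.fst_sub, Prod.snd_sub, partialDeriv_sub hv.fst hw.fst,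
    partialDeriv_sub hv.snd hw.snd]
  ring

theorem vort_const_smul (c : ℝ) (hv : DifferentiableAt ℝ v x) :
    vort (fun y => c • v y) x = c * vort v x := by
  simp only [vort, pd_eq_partialDeriv, partialDeriv, Prod.smul_fst, Prod.smul_snd,
    smul_eq_mul, fderiv_const_mul hv.fst, fderiv_const_mul hv.snd, smul_apply]
  ring

theorem vort_gradient_eq_zero {f : ℝ × ℝ → ℝ} (hf : ContDiff ℝ 2 f) (x : ℝ × ℝ) :
    vort (fun y => (∂₁ f y, ∂₂ f y)) x = 0 :=
  sub_eq_zero.2 (congrFun (partialDeriv_comm hf (0, 1) (1, 0)) x)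

theorem vort_lap (hv : ContDiff ℝ 3 v) (x : ℝ × ℝ) :
    vort (fun y => (lap (fun z => (v z).1) y, lap (fun z => (v z).2) y)) x = lap (vort v) x := by
  have hd {f : ℝ × ℝ → ℝ} (hf : ContDiff ℝ 3 f) (a : ℝ × ℝ) : ContDiff ℝ 2 (partialDeriv a f) :=
    contDiff_partialDeriv hf (by norm_num) a
  have hdd {f : ℝ × ℝ → ℝ} (hf : ContDiff ℝ 3 f) (a c : ℝ × ℝ) :
      Differentiable ℝ (partialDeriv a (partialDeriv c f)) :=
    differentiable_partialDeriv (hd hf c) a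
  have comm {f : ℝ × ℝ → ℝ} (hf : ContDiff ℝ 3 f) (a c : ℝ × ℝ) :
      partialDeriv a (partialDeriv c (partialDeriv c f)) x =
        partialDeriv c (partialDeriv c (partialDeriv a f)) x := by
    rw [partialDeriv_comm (hd hf c) a c, partialDeriv_comm (hf.of_le (by norm_num)) a c]
  have vort_partial (a y : ℝ × ℝ) : partialDeriv a (vort v) y =
      partialDeriv a (∂₂ fun z => (v z).1) y - partialDeriv a (∂₁ fun z => (v z).2) y :=
    partialDeriv_sub ((hd hv.fst _).differentiable (by simp) y)
      ((hd hv.snd _).differentiable (by simp) y) a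
  simp only [lap, vort, pd_eq_partialDeriv] at vort_partial ⊢
  simp only [funext (vort_partial _),
    partialDeriv_add (hdd hv.fst _ _ x) (hdd hv.fst _ _ x),
    partialDeriv_add (hdd hv.snd _ _ x) (hdd hv.snd _ _ x),
    partialDeriv_sub (hdd hv.fst _ _ x) (hdd hv.snd _ _ x), comm hv.fst (0, 1) (1, 0),
    comm hv.snd (1, 0) (0, 1)]
  ring

/-- The transport term `(p · ∇) v`. -/
noncomputable def transport (p v : ℝ × ℝ → ℝ × ℝ) (x : ℝ × ℝ) : ℝ × ℝ :=
  (advect p (fun y => (v y).1) x, advect p (fun y => (v y).2) x)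

/-- The commutator of `vort` and transport by `p`, i.e. the difference of `vort ((p · ∇) v)` and
`p · ∇ vort v`. -/
noncomputable def vortCommutator (p v : ℝ × ℝ → ℝ × ℝ) (x : ℝ × ℝ) : ℝ :=
  advect (∂₂ p) (fun y => (v y).1) x - advect (∂₁ p) (fun y => (v y).2) x

theorem contDiff_advect {p : ℝ × ℝ → ℝ × ℝ} {f : ℝ × ℝ → ℝ} (hp : ContDiff ℝ m p)
    (hf : ContDiff ℝ n f) (hmn : m + 1 ≤ n) : ContDiff ℝ m (advect p f) :=
  (hp.fst.mul (contDiff_partialDeriv hf hmn _)).add (hp.snd.mul (contDiff_partialDeriv hf hmn _))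

theorem contDiff_transport (hp : ContDiff ℝ m p) (hv : ContDiff ℝ n v) (hmn : m + 1 ≤ n) :
    ContDiff ℝ m (transport p v) :=
  (contDiff_advect hp hv.fst hmn).prodMk (contDiff_advect hp hv.snd hmn)

theorem contDiff_vortCommutator (hp : ContDiff ℝ n p) (hv : ContDiff ℝ n v) (hmn : m + 1 ≤ n) :
    ContDiff ℝ m (vortCommutator p v) :=
  (contDiff_advect (contDiff_partialDeriv hp hmn _) hv.fst hmn).sub
    (contDiff_advect (contDiff_partialDeriv hp hmn _) hv.snd hmn)

theorem partialDeriv_advect {f : ℝ × ℝ → ℝ} (hp : Differentiable ℝ p) (hf : ContDiff ℝ 2 f)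
    (a x : ℝ × ℝ) :
    partialDeriv a (advect p f) x =
      advect p (partialDeriv a f) x + advect (partialDeriv a p) f x := by
  have hd (c : ℝ × ℝ) := (differentiable_partialDeriv hf c).differentiableAt (x := x)
  unfold advect
  simp only [pd_eq_partialDeriv]
  rw [partialDeriv_add ((hp x).fst.fun_mul (hd _)) ((hp x).snd.fun_mul (hd _)),
    partialDeriv_mul (hp x).fst (hd _), partialDeriv_mul (hp x).snd (hd _),
    partialDeriv_comm hf a (1, 0), partialDeriv_comm hf a (0, 1), partialDeriv_fst (hp x),
    partialDeriv_snd (hp x)]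
  ring

theorem vort_transport (hp : Differentiable ℝ p) (hv : ContDiff ℝ 2 v) (x : ℝ × ℝ) :
    vort (transport p v) x = advect p (vort v) x + vortCommutator p v x := by
  have hd {f : ℝ × ℝ → ℝ} (hf : ContDiff ℝ 2 f) (a : ℝ × ℝ) :=
    (differentiable_partialDeriv hf a).differentiableAt (x := x)
  have advect_vort : advect p (vort v) x =
      advect p (∂₂ fun y => (v y).1) x - advect p (∂₁ fun y => (v y).2) x := by
    unfold advect vort
    simp only [pd_eq_partialDeriv, partialDeriv_sub (hd hv.fst _) (hd hv.snd _)]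
    ring
  change ∂₂ (advect p fun y => (v y).1) x - ∂₁ (advect p fun y => (v y).2) x = _
  rw [partialDeriv_advect hp hv.fst, partialDeriv_advect hp hv.snd, advect_vort, vortCommutator]
  ring

theorem vortCommutator_self (hv : DifferentiableAt ℝ v x) (hdiv : divg v x = 0) :
    vortCommutator v v x = 0 := by
  simp only [divg, pd_eq_partialDeriv, partialDeriv_fst hv, partialDeriv_snd hv] at hdiv
  simp only [vortCommutator, advect, pd_eq_partialDeriv, partialDeriv_fst hv, partialDeriv_snd hv]
  linear_combination ((∂₂ v x).1 - (∂₁ v x).2) * hdiv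

/-- The plane vector field `v` with values in the Euclidean plane, whereas `ℝ × ℝ` carries the
maximum norm. -/
noncomputable def eucl (v : ℝ × ℝ → ℝ × ℝ) : ℝ × ℝ → WithLp 2 (ℝ × ℝ) :=
  l2Pair (fun x => (v x).1) (fun x => (v x).2)

theorem contDiff_eucl (hv : ContDiff ℝ n v) : ContDiff ℝ n (eucl v) :=
  contDiff_l2Pair hv.fst hv.snd

theorem norm_sq_eucl (v : ℝ × ℝ → ℝ × ℝ) (x : ℝ × ℝ) :
    ‖eucl v x‖ ^ 2 = (v x).1 ^ 2 + (v x).2 ^ 2 := by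
  simp only [eucl, norm_sq_l2Pair, Real.norm_eq_abs, sq_abs]

theorem gradSq_eucl (hv : Differentiable ℝ v) (x : ℝ × ℝ) :
    gradSq (eucl v) x =
      (∂₁ v x).1 ^ 2 + (∂₁ v x).2 ^ 2 + (∂₂ v x).1 ^ 2 + (∂₂ v x).2 ^ 2 := by
  rw [eucl, gradSq_l2Pair hv.fst hv.snd]
  simp only [gradSq, partialDeriv_fst (hv x), partialDeriv_snd (hv x), Real.norm_eq_abs, sq_abs]
  ring

theorem vort_sq_le (hv : Differentiable ℝ v) (x : ℝ × ℝ) :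
    vort v x ^ 2 ≤ 2 * gradSq (eucl v) x := by
  rw [gradSq_eucl hv]
  simp only [vort, pd_eq_partialDeriv, partialDeriv_fst (hv x), partialDeriv_snd (hv x)]
  nlinarith [sq_nonneg ((∂₂ v x).1 + (∂₁ v x).2), sq_nonneg (∂₁ v x).1, sq_nonneg (∂₂ v x).2]

theorem vortCommutator_sq_le (hp : Differentiable ℝ p) (hv : Differentiable ℝ v) (x : ℝ × ℝ) :
    vortCommutator p v x ^ 2 ≤ gradSq (eucl p) x * gradSq (eucl v) x := by
  have cauchySchwarz (a b c d a' b' c' d' : ℝ) :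
      (a * a' + b * b' - (c * c' + d * d')) ^ 2 ≤
        (c ^ 2 + d ^ 2 + a ^ 2 + b ^ 2) * (a' ^ 2 + c' ^ 2 + b' ^ 2 + d' ^ 2) := by
    nlinarith [sq_nonneg (a * b' - b * a'), sq_nonneg (a * c' + c * a'),
      sq_nonneg (a * d' + d * a'), sq_nonneg (b * c' + c * b'), sq_nonneg (b * d' + d * b'),
      sq_nonneg (c * d' - d * c')]
  rw [gradSq_eucl hp, gradSq_eucl hv]
  simp only [vortCommutator, advect, pd_eq_partialDeriv, partialDeriv_fst (hv x),
    partialDeriv_snd (hv x)]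
  exact cauchySchwarz _ _ _ _ _ _ _ _

theorem norm_vecLap_eucl_sq (hv : ContDiff ℝ 2 v) (hdiv : ∀ x, divg v x = 0) (x : ℝ × ℝ) :
    ‖vecLap (eucl v) x‖ ^ 2 = gradSq (vort v) x := by
  have hd {f : ℝ × ℝ → ℝ} (hf : ContDiff ℝ 2 f) (a : ℝ × ℝ) :=
    (differentiable_partialDeriv hf a).differentiableAt (x := x)
  have div_partial (a : ℝ × ℝ) : partialDeriv a (∂₁ fun y => (v y).1) x +
      partialDeriv a (∂₂ fun y => (v y).2) x = 0 := by
    rw [← partialDeriv_add (hd hv.fst _) (hd hv.snd _)]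
    change partialDeriv a (divg v) x = 0
    simp [show divg v = fun _ => 0 from funext hdiv, partialDeriv]
  have vort_partial (a : ℝ × ℝ) : partialDeriv a (vort v) x =
      partialDeriv a (∂₂ fun y => (v y).1) x - partialDeriv a (∂₁ fun y => (v y).2) x :=
    partialDeriv_sub (hd hv.fst _) (hd hv.snd _) a
  have h₁ := div_partial (1, 0)
  have h₂ := div_partial (0, 1)
  rw [partialDeriv_comm hv.snd (1, 0) (0, 1)] at h₁
  rw [partialDeriv_comm hv.fst (0, 1) (1, 0)] at h₂
  rw [eucl, norm_vecLap_l2Pair_sq hv.fst hv.snd]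
  simp only [gradSq, vecLap, vort_partial, Real.norm_eq_abs, sq_abs, eq_neg_of_add_eq_zero_left h₁,
    eq_neg_of_add_eq_zero_right h₂]
  ring

end Vorticity

/-- The source term of the current equation; it is quadratic in the gradients of `u` and `b`. -/
noncomputable def stretching (u b : ℝ × ℝ → ℝ × ℝ) (x : ℝ × ℝ) : ℝ :=
  vortCommutator b u x - vortCommutator u b x

theorem continuous_stretching {u b : ℝ × ℝ → ℝ × ℝ} (hu : ContDiff ℝ 1 u) (hb : ContDiff ℝ 1 b) :
    Continuous (stretching u b) :=
  (contDiff_vortCommutator (m := 0) hb hu (by norm_num)).continuous.sub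
    (contDiff_vortCommutator (m := 0) hu hb (by norm_num)).continuous

theorem stretching_sq_le {u b : ℝ × ℝ → ℝ × ℝ} (hu : Differentiable ℝ u) (hb : Differentiable ℝ b)
    (x : ℝ × ℝ) : stretching u b x ^ 2 ≤ 4 * (gradSq (eucl u) x * gradSq (eucl b) x) := by
  rw [stretching]
  linarith [sq_nonneg (vortCommutator b u x + vortCommutator u b x),
    vortCommutator_sq_le hb hu x, vortCommutator_sq_le hu hb x]

/-- The vorticity formulation of the stationary MHD system for fields of finite Dirichlet energy;
`vort b` is the electric current. -/
structure IsFiniteEnergyMHD (μ ν : ℝ) (u b : ℝ × ℝ → ℝ × ℝ) : Prop where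
  viscosity_pos : 0 < μ
  resistivity_pos : 0 < ν
  contDiff_velocity : ContDiff ℝ 3 u
  contDiff_magnetic : ContDiff ℝ 3 b
  divg_velocity : ∀ x, divg u x = 0
  divg_magnetic : ∀ x, divg b x = 0
  lap_vorticity : ∀ x, μ * lap (vort u) x = advect u (vort u) x - advect b (vort b) x
  lap_current : ∀ x, ν * lap (vort b) x =
    advect u (vort b) x - advect b (vort u) x - stretching u b x
  integrable_velocity : Integrable (gradSq (eucl u))
  integrable_magnetic : Integrable (gradSq (eucl b))

theorem mul_lap_vort_eq {κ : ℝ} {v F : ℝ × ℝ → ℝ × ℝ} (hv : ContDiff ℝ 3 v)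
    (h₁ : ∀ x, κ * lap (fun y => (v y).1) x = (F x).1)
    (h₂ : ∀ x, κ * lap (fun y => (v y).2) x = (F x).2) (x : ℝ × ℝ) :
    κ * lap (vort v) x = vort F x := by
  have hL : ContDiff ℝ 1 (fun y => (lap (fun z => (v z).1) y, lap (fun z => (v z).2) y)) :=
    have hlap {f : ℝ × ℝ → ℝ} (hf : ContDiff ℝ 3 f) : ContDiff ℝ 1 (lap f) :=
      have hd (a : ℝ × ℝ) : ContDiff ℝ 2 (partialDeriv a f) :=
        contDiff_partialDeriv hf (by norm_num) a
      (contDiff_partialDeriv (hd _) (by norm_num) _).add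
        (contDiff_partialDeriv (hd _) (by norm_num) _)
    (hlap hv.fst).prodMk (hlap hv.snd)
  rw [← vort_lap hv, ← vort_const_smul κ (hL.differentiable (by simp) x)]
  exact congrArg (vort · x) (funext fun y => Prod.ext (h₁ y) (h₂ y))

theorem isFiniteEnergyMHD_of_isMHD {μ ν : ℝ} (hμ : 0 < μ) (hν : 0 < ν) {u b : ℝ × ℝ → ℝ × ℝ}
    {pr : ℝ × ℝ → ℝ} (hu : ContDiff ℝ 3 u) (hb : ContDiff ℝ 3 b) (hpr : ContDiff ℝ 2 pr)
    (h : isMHD μ ν u b pr) (hgu : Integrable (gradSq (eucl u)))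
    (hgb : Integrable (gradSq (eucl b))) : IsFiniteEnergyMHD μ ν u b := by
  obtain ⟨momentum₁, momentum₂, induction₁, induction₂, divg_u, divg_b⟩ := h
  simp only [pd_eq_partialDeriv] at momentum₁ momentum₂
  have hd {v : ℝ × ℝ → ℝ × ℝ} (hv : ContDiff ℝ 3 v) : Differentiable ℝ v :=
    hv.differentiable (by simp)
  have ht {p v : ℝ × ℝ → ℝ × ℝ} (hp : ContDiff ℝ 3 p) (hv : ContDiff ℝ 3 v) :
      Differentiable ℝ (transport p v) :=
    (contDiff_transport (m := 2) (hp.of_le (by norm_num)) hv (by norm_num)).differentiable (by simp)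
  have vort_transport' {p v : ℝ × ℝ → ℝ × ℝ} (hp : ContDiff ℝ 3 p) (hv : ContDiff ℝ 3 v) :=
    vort_transport (hd hp) (hv.of_le (by norm_num) : ContDiff ℝ 2 v)
  have hpr' : Differentiable ℝ fun y => (∂₁ pr y, ∂₂ pr y) :=
    (differentiable_partialDeriv hpr _).prodMk (differentiable_partialDeriv hpr _)
  refine ⟨hμ, hν, hu, hb, divg_u, divg_b, fun x => ?_, fun x => ?_, hgu, hgb⟩
  · rw [mul_lap_vort_eq hu
      (F := fun y => transport u u y + (∂₁ pr y, ∂₂ pr y) - transport b b y)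
      (fun y => by simp only [transport, Prod.fst_sub, Prod.fst_add]; linarith [momentum₁ y])
      (fun y => by simp only [transport, Prod.snd_sub, Prod.snd_add]; linarith [momentum₂ y]),
      vort_sub ((ht hu hu x).fun_add (hpr' x)) (ht hb hb x), vort_add (ht hu hu x) (hpr' x),
      vort_gradient_eq_zero hpr, vort_transport' hu hu, vort_transport' hb hb,
      vortCommutator_self (hd hu x) (divg_u x), vortCommutator_self (hd hb x) (divg_b x)]
    ring
  · rw [mul_lap_vort_eq hb (F := fun y => transport u b y - transport b u y)
      (fun y => by simp only [transport, Prod.fst_sub]; linarith [induction₁ y])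
      (fun y => by simp only [transport, Prod.snd_sub]; linarith [induction₂ y]),
      vort_sub (ht hu hb x) (ht hb hu x), vort_transport' hu hb, vort_transport' hb hu, stretching]
    ring

/-! ### Localised energy estimates -/

theorem young_of_sq_le {ε p r s y : ℝ} (hε : 0 < ε) (hs : 0 ≤ s) (hr : 0 ≤ r)
    (h : p ^ 2 ≤ y ^ 2 * s ^ 2 * r) :
    p ≤ ε * s + ε * (y ^ 2 * s) ^ 2 + r ^ 2 / (64 * ε ^ 3) := by
  have first : p ≤ ε * s + y ^ 2 * s * r / (4 * ε) := by
    refine le_of_sq_le_sq (h.trans ?_) (by positivity)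
    have hmid : y ^ 2 * s ^ 2 * r = 4 * ((ε * s) * (y ^ 2 * s * r / (4 * ε))) := by
      field_simp
    linarith [sq_nonneg (ε * s - y ^ 2 * s * r / (4 * ε))]
  have second : y ^ 2 * s * r / (4 * ε) ≤ ε * (y ^ 2 * s) ^ 2 + r ^ 2 / (64 * ε ^ 3) := by
    have hsq : ε * (y ^ 2 * s) ^ 2 + r ^ 2 / (64 * ε ^ 3) - y ^ 2 * s * r / (4 * ε) =
        ε * (y ^ 2 * s - r / (8 * ε ^ 2)) ^ 2 := by
      field_simp
      ring
    linarith [mul_nonneg hε.le (sq_nonneg (y ^ 2 * s - r / (8 * ε ^ 2)))]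
  linarith

theorem neg_advect_cutoff_pow_four_le {f : ℝ × ℝ → E} {W : ℝ × ℝ → ℝ × ℝ} {R ε : ℝ} (hε : 0 < ε)
    {x : ℝ × ℝ} (hle : (W x).1 ^ 2 + (W x).2 ^ 2 ≤ 2 * gradSq f x ^ 2 * ‖f x‖ ^ 2) :
    -advect W (fun y => cutoff R y ^ 4) x ≤ ε * gradSq f x + ε * (cutoff R x ^ 8 * gradSq f x ^ 2) +
      16 * cutoffGradBound ^ 2 / (ε ^ 3 * R ^ 4) * (cutoff R x ^ 4 * ‖f x‖ ^ 4) := by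
  have hbound : advect W (cutoff R) x ^ 2 ≤
      2 * gradSq f x ^ 2 * ‖f x‖ ^ 2 * (cutoffGradBound / R ^ 2) :=
    (advect_sq_le W _ x).trans (mul_le_mul hle (gradSq_cutoff_le R x) (gradSq_nonneg _ x)
      (by positivity))
  have hc := cutoffGradBound_nonneg
  have h := young_of_sq_le (p := -(4 * cutoff R x ^ 3 * advect W (cutoff R) x))
    (r := 32 * cutoff R x ^ 2 * ‖f x‖ ^ 2 * (cutoffGradBound / R ^ 2)) (y := cutoff R x ^ 2)
    hε (gradSq_nonneg f x) (by positivity) ?_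
  · rw [advect_pow (differentiable_cutoff R x)]
    calc _ = -(4 * cutoff R x ^ 3 * advect W (cutoff R) x) := by norm_num
      _ ≤ _ := h
      _ = _ := by field_simp; ring
  · calc _ = 16 * cutoff R x ^ 6 * advect W (cutoff R) x ^ 2 := by ring
      _ ≤ 16 * cutoff R x ^ 6 * (2 * gradSq f x ^ 2 * ‖f x‖ ^ 2 * (cutoffGradBound / R ^ 2)) := by
        have := cutoff_nonneg R x
        gcongr
      _ = _ := by ring

theorem eventually_integral_cutoff_pow_four_mul_divg_le {f : ℝ × ℝ → E} {W : ℝ × ℝ → ℝ × ℝ}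
    (hf : ContDiff ℝ 1 f) (hgrad : Integrable (gradSq f)) (hW : ContDiff ℝ 1 W)
    (hle : ∀ x, (W x).1 ^ 2 + (W x).2 ^ 2 ≤ 2 * gradSq f x ^ 2 * ‖f x‖ ^ 2)
    {ε : ℝ} (hε : 0 < ε) :
    ∀ᶠ R in atTop, ∫ x, cutoff R x ^ 4 * divg W x ≤
      ε * ((∫ x, gradSq f x) + (∫ x, cutoff R x ^ 8 * gradSq f x ^ 2) + 1) := by
  obtain ⟨M, growth⟩ := exists_integral_cutoff_pow_four_mul_norm_pow_four_le hf hgrad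
  have error_small : ∀ᶠ R in atTop, 16 * cutoffGradBound ^ 2 * M / ε ^ 3 / R ≤ ε :=
    (tendsto_const_nhds.div_atTop tendsto_id).eventually_le_const hε
  filter_upwards [error_small, eventually_ge_atTop 1] with R herr hR
  have hR0 : 0 < R := one_pos.trans_le hR
  obtain ⟨hdiv, hdiv0⟩ := integrable_and_integral_mul_divg_add_advect
    ((contDiff_cutoff (n := 1) R).pow 4)
    (hasCompactSupport_pow (hasCompactSupport_cutoff hR0) four_ne_zero) hW
  have hG := hgrad.const_mul ε
  have hGc : Continuous fun x => gradSq f x ^ 2 := (continuous_gradSq hf).pow 2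
  have hG2 := (integrable_cutoff_pow_mul hR0 (k := 8) (by norm_num) hGc).const_mul ε
  have hf4 := (integrable_cutoff_pow_mul hR0 four_ne_zero
    (continuous_norm_pow hf.continuous 4)).const_mul (16 * cutoffGradBound ^ 2 / (ε ^ 3 * R ^ 4))
  have hW0 := integrable_cutoff_pow_mul hR0 four_ne_zero (continuous_divg hW)
  have hmono := integral_mono hW0 (((hdiv.fun_add hG).fun_add hG2).fun_add hf4) fun x => by
    linarith [neg_advect_cutoff_pow_four_le (R := R) hε (hle x)]
  rw [integral_add ((hdiv.fun_add hG).fun_add hG2) hf4, integral_add (hdiv.fun_add hG) hG2,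
    integral_add hdiv hG, hdiv0, integral_const_mul, integral_const_mul, integral_const_mul,
    zero_add] at hmono
  have error_le : 16 * cutoffGradBound ^ 2 / (ε ^ 3 * R ^ 4) *
      (∫ x, cutoff R x ^ 4 * ‖f x‖ ^ 4) ≤ ε :=
    calc _ ≤ 16 * cutoffGradBound ^ 2 / (ε ^ 3 * R ^ 4) * (M * R ^ 3) := by
          gcongr
          exact growth R hR
      _ = 16 * cutoffGradBound ^ 2 * M / ε ^ 3 / R := by field_simp
      _ ≤ ε := herr
  linarith

theorem norm_grad_pow_four (f : ℝ × ℝ → E) (x : ℝ × ℝ) : ‖grad f x‖ ^ 4 = gradSq f x ^ 2 := by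
  rw [← norm_sq_grad]
  ring

theorem integrable_and_integral_gradSq_sq_le {f : ℝ × ℝ → E} (hf : ContDiff ℝ 2 f)
    (hgrad : Integrable (gradSq f)) (hhess : Integrable (hessSq f)) :
    Integrable (fun x => gradSq f x ^ 2) ∧ ∫ x, gradSq f x ^ 2 ≤
      2 * ladyzhenskayaConst * (∫ x, gradSq f x) * ∫ x, hessSq f x := by
  have hG : gradSq (grad f) = hessSq f := funext (gradSq_grad hf)
  have h := integrable_and_integral_norm_pow_four_le (contDiff_grad hf (by norm_num))
    (by simpa only [norm_sq_grad] using hgrad) (by rwa [hG])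
  simpa only [hG, norm_grad_pow_four, norm_sq_grad] using h

theorem integral_cutoff_pow_eight_mul_gradSq_sq_le {f : ℝ × ℝ → E} (hf : ContDiff ℝ 2 f) {R : ℝ}
    (hR : 0 < R) :
    ∫ x, cutoff R x ^ 8 * gradSq f x ^ 2 ≤
      2 * ladyzhenskayaConst * (∫ x, cutoff R x ^ 4 * gradSq f x) *
        ((∫ x, cutoff R x ^ 4 * hessSq f x) +
          4 * (cutoffGradBound / R ^ 2 * ∫ x, cutoff R x ^ 2 * gradSq f x)) := by
  have hG : gradSq (grad f) = hessSq f := funext (gradSq_grad hf)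
  have hi : Integrable fun x => cutoff R x ^ (2 * 1) * ‖grad f x‖ ^ 2 := by
    simp only [norm_sq_grad]
    exact integrable_cutoff_pow_mul hR two_ne_zero (continuous_gradSq (hf.of_le (by norm_num)))
  have h := integral_cutoff_pow_mul_norm_pow_four_le_of_integrable hR
    (contDiff_grad hf (by norm_num)) hi
  simp only [hG, norm_grad_pow_four, norm_sq_grad, Nat.cast_one] at h
  convert h using 4
  norm_num

theorem exists_integral_cutoff_pow_eight_mul_gradSq_sq_le {f : ℝ × ℝ → E} (hf : ContDiff ℝ 3 f)
    (hgrad : Integrable (gradSq f)) :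
    ∃ L, 0 ≤ L ∧ ∀ R, 1 ≤ R → ∫ x, cutoff R x ^ 8 * gradSq f x ^ 2 ≤
      L * ((∫ x, cutoff R x ^ 4 * ‖vecLap f x‖ ^ 2) + 1) := by
  set D := ∫ x, gradSq f x
  have hK := ladyzhenskayaConst_pos
  have hc := cutoffGradBound_nonneg
  have hD0 : 0 ≤ D := integral_nonneg (gradSq_nonneg f)
  refine ⟨2 * ladyzhenskayaConst * D * (2 + 20 * cutoffGradBound * D), by positivity,
    fun R hR => ?_⟩
  have hR0 : 0 < R := one_pos.trans_le hR
  have hdiv : cutoffGradBound / R ^ 2 ≤ cutoffGradBound := div_le_self hc (one_le_pow₀ hR)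
  have hle (k : ℕ) : ∫ x, cutoff R x ^ k * gradSq f x ≤ D :=
    integral_cutoff_pow_mul_le (gradSq_nonneg f) hgrad k
  have h0 (k : ℕ) := integral_cutoff_pow_mul_nonneg R k (gradSq_nonneg f)
  have hess := integral_cutoff_pow_four_mul_hessSq_le hR0 hf hgrad
  set T := ∫ x, cutoff R x ^ 4 * ‖vecLap f x‖ ^ 2
  have hT : 0 ≤ T := integral_cutoff_pow_mul_nonneg R 4 fun x => sq_nonneg _
  have higher : (∫ x, cutoff R x ^ 4 * hessSq f x) +
      4 * (cutoffGradBound / R ^ 2 * ∫ x, cutoff R x ^ 2 * gradSq f x) ≤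
      (2 + 20 * cutoffGradBound * D) * (T + 1) := by
    have h₁ := mul_le_mul_of_nonneg_right hdiv hD0
    have h₂ := mul_le_mul hdiv (hle 2) (h0 2) hc
    nlinarith [mul_nonneg (mul_nonneg hc hD0) hT]
  calc _ ≤ _ := integral_cutoff_pow_eight_mul_gradSq_sq_le (hf.of_le (by norm_num)) hR0
    _ ≤ 2 * ladyzhenskayaConst * D * ((2 + 20 * cutoffGradBound * D) * (T + 1)) :=
        mul_le_mul (mul_le_mul_of_nonneg_left (hle 4) (by positivity)) higher
          (add_nonneg (integral_cutoff_pow_mul_nonneg R 4 (hessSq_nonneg f))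
            (mul_nonneg zero_le_four (mul_nonneg (by positivity) (h0 2)))) (by positivity)
    _ = _ := by ring

theorem integrable_norm_vecLap_sq_of_cutoff {f : ℝ × ℝ → E} (hf : ContDiff ℝ 3 f)
    (hgrad : Integrable (gradSq f))
    (h : ∀ ε, 0 < ε → ∃ M, ∀ᶠ R in atTop, ∫ x, cutoff R x ^ 4 * ‖vecLap f x‖ ^ 2 ≤
      ε * (∫ x, cutoff R x ^ 8 * gradSq f x ^ 2) + M) :
    Integrable fun x => ‖vecLap f x‖ ^ 2 := by
  obtain ⟨L, hL, hquartic⟩ := exists_integral_cutoff_pow_eight_mul_gradSq_sq_le hf hgrad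
  obtain ⟨M, hM⟩ := h (1 / (2 * (L + 1))) (by positivity)
  refine (integrable_and_integral_le_of_cutoff
    (continuous_norm_pow (continuous_vecLap (hf.of_le (by norm_num))) 2) (fun x => sq_nonneg _)
    four_ne_zero (tendsto_const_nhds (x := 2 * M + 1)) ?_).1
  filter_upwards [hM, eventually_ge_atTop 1] with R hMR hR
  set T := ∫ x, cutoff R x ^ 4 * ‖vecLap f x‖ ^ 2
  have hT : 0 ≤ T := integral_cutoff_pow_mul_nonneg R 4 fun x => sq_nonneg _
  have absorb : 1 / (2 * (L + 1)) * (∫ x, cutoff R x ^ 8 * gradSq f x ^ 2) ≤ (T + 1) / 2 :=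
    calc _ ≤ 1 / (2 * (L + 1)) * (L * (T + 1)) := by gcongr; exact hquartic R hR
      _ ≤ 1 / (2 * (L + 1)) * ((L + 1) * (T + 1)) := by gcongr; linarith
      _ = (T + 1) / 2 := by field_simp
  linarith

/-! ### Enstrophy dissipation -/

theorem divg_sub {V W : ℝ × ℝ → ℝ × ℝ} {x : ℝ × ℝ} (hV : DifferentiableAt ℝ V x)
    (hW : DifferentiableAt ℝ W x) : divg (fun y => V y - W y) x = divg V x - divg W x := by
  simp only [divg, pd_eq_partialDeriv, Prod.fst_sub, Prod.snd_sub]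
  rw [partialDeriv_sub hV.fst hW.fst, partialDeriv_sub hV.snd hW.snd]
  ring

theorem advect_add {φ ψ : ℝ × ℝ → ℝ} {x : ℝ × ℝ} (hφ : DifferentiableAt ℝ φ x)
    (hψ : DifferentiableAt ℝ ψ x) (V : ℝ × ℝ → ℝ × ℝ) :
    advect V (fun y => φ y + ψ y) x = advect V φ x + advect V ψ x := by
  simp only [advect, pd_eq_partialDeriv, partialDeriv_add hφ hψ]
  ring

theorem advect_const_mul (c : ℝ) {φ : ℝ × ℝ → ℝ} {x : ℝ × ℝ} (hφ : DifferentiableAt ℝ φ x)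
    (V : ℝ × ℝ → ℝ × ℝ) : advect V (fun y => c * φ y) x = c * advect V φ x := by
  rw [advect_mul (differentiableAt_const c) hφ]
  simp [advect, pd]

/-- The pair `(u, b)`, as a map into a Euclidean space. -/
noncomputable def mhdState (u b : ℝ × ℝ → ℝ × ℝ) :
    ℝ × ℝ → WithLp 2 (WithLp 2 (ℝ × ℝ) × WithLp 2 (ℝ × ℝ)) :=
  l2Pair (eucl u) (eucl b)

/-- The flux of enstrophy carried by the velocity and the magnetic field. -/
noncomputable def enstrophyFlux (u b : ℝ × ℝ → ℝ × ℝ) (x : ℝ × ℝ) : ℝ × ℝ :=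
  (vort u x * vort b x) • b x - (2⁻¹ * (vort u x ^ 2 + vort b x ^ 2)) • u x

theorem contDiff_enstrophyFlux {u b : ℝ × ℝ → ℝ × ℝ} (hu : ContDiff ℝ 2 u) (hb : ContDiff ℝ 2 b) :
    ContDiff ℝ 1 (enstrophyFlux u b) := by
  have hw : ContDiff ℝ 1 (vort u) := contDiff_vort hu (by norm_num)
  have hj : ContDiff ℝ 1 (vort b) := contDiff_vort hb (by norm_num)
  exact ((hw.mul hj).smul (hb.of_le (by norm_num))).sub
    ((contDiff_const.mul ((hw.pow 2).add (hj.pow 2))).smul (hu.of_le (by norm_num)))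

theorem divg_enstrophyFlux {u b : ℝ × ℝ → ℝ × ℝ} (hu : ContDiff ℝ 2 u) (hb : ContDiff ℝ 2 b)
    {x : ℝ × ℝ} (hdu : divg u x = 0) (hdb : divg b x = 0) :
    divg (enstrophyFlux u b) x =
      vort u x * (advect b (vort b) x - advect u (vort u) x) +
        vort b x * (advect b (vort u) x - advect u (vort b) x) := by
  have hd {v : ℝ × ℝ → ℝ × ℝ} (hv : ContDiff ℝ 2 v) : DifferentiableAt ℝ v x :=
    hv.differentiable (by simp) x
  have hvort {v : ℝ × ℝ → ℝ × ℝ} (hv : ContDiff ℝ 2 v) : DifferentiableAt ℝ (vort v) x :=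
    (contDiff_vort (m := 1) hv (by norm_num)).differentiable (by simp) x
  have hprod := (hvort hu).fun_mul (hvort hb)
  have hsum := ((hvort hu).fun_pow 2).fun_add ((hvort hb).fun_pow 2)
  unfold enstrophyFlux
  rw [divg_sub (hprod.fun_smul (hd hb)) ((hsum.const_mul 2⁻¹).fun_smul (hd hu)),
    divg_smul hprod (hd hb), divg_smul (hsum.const_mul 2⁻¹) (hd hu), hdu, hdb,
    advect_mul (hvort hu) (hvort hb), advect_const_mul _ hsum,
    advect_add ((hvort hu).fun_pow 2) ((hvort hb).fun_pow 2), advect_pow (hvort hu),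
    advect_pow (hvort hb)]
  ring

theorem gradSq_mhdState {u b : ℝ × ℝ → ℝ × ℝ} (hu : ContDiff ℝ 1 u) (hb : ContDiff ℝ 1 b)
    (x : ℝ × ℝ) : gradSq (mhdState u b) x = gradSq (eucl u) x + gradSq (eucl b) x :=
  gradSq_l2Pair ((contDiff_eucl hu).differentiable (by simp))
    ((contDiff_eucl hb).differentiable (by simp)) x

theorem enstrophyFlux_sq_le {u b : ℝ × ℝ → ℝ × ℝ} (hu : ContDiff ℝ 1 u) (hb : ContDiff ℝ 1 b)
    (x : ℝ × ℝ) :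
    (enstrophyFlux u b x).1 ^ 2 + (enstrophyFlux u b x).2 ^ 2 ≤
      2 * gradSq (mhdState u b) x ^ 2 * ‖mhdState u b x‖ ^ 2 := by
  set p := vort u x * vort b x
  set q := 2⁻¹ * (vort u x ^ 2 + vort b x ^ 2) with hq
  have hqG : q ≤ gradSq (mhdState u b) x := by
    linarith [vort_sq_le (hu.differentiable (by simp)) x,
      vort_sq_le (hb.differentiable (by simp)) x, gradSq_mhdState hu hb x]
  have hp2 : p ^ 2 ≤ gradSq (mhdState u b) x ^ 2 :=
    sq_le_sq' (by nlinarith [sq_nonneg (vort u x + vort b x)])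
      (by nlinarith [sq_nonneg (vort u x - vort b x)])
  have hq2 : q ^ 2 ≤ gradSq (mhdState u b) x ^ 2 := pow_le_pow_left₀ (by positivity) hqG 2
  have hcomp (s t : ℝ) : (p * s - q * t) ^ 2 ≤ 2 * gradSq (mhdState u b) x ^ 2 * (t ^ 2 + s ^ 2) :=
    calc _ ≤ 2 * (p ^ 2 * s ^ 2 + q ^ 2 * t ^ 2) := by linarith [sq_nonneg (p * s + q * t)]
      _ ≤ 2 * (gradSq (mhdState u b) x ^ 2 * s ^ 2 + gradSq (mhdState u b) x ^ 2 * t ^ 2) := by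
        gcongr
      _ = _ := by ring
  have h₁ := hcomp (b x).1 (u x).1
  have h₂ := hcomp (b x).2 (u x).2
  rw [mhdState, norm_sq_l2Pair, norm_sq_eucl, norm_sq_eucl, ← mhdState]
  change (p * (b x).1 - q * (u x).1) ^ 2 + (p * (b x).2 - q * (u x).2) ^ 2 ≤ _
  linarith

theorem integrable_vort_sq {v : ℝ × ℝ → ℝ × ℝ} (hv : ContDiff ℝ 1 v)
    (hgrad : Integrable (gradSq (eucl v))) : Integrable fun x => vort v x ^ 2 :=
  have hc : Continuous (vort v) := (contDiff_vort (m := 0) hv (by norm_num)).continuous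
  (hgrad.const_mul 2).mono' (hc.pow 2).aestronglyMeasurable (ae_of_all _ fun x => by
    rw [norm_of_nonneg (sq_nonneg _)]
    exact vort_sq_le (hv.differentiable (by simp)) x)

theorem integral_cutoff_pow_four_mul_gradSq_vort_le {v : ℝ × ℝ → ℝ × ℝ} (hv : ContDiff ℝ 3 v)
    (hgrad : Integrable (gradSq (eucl v))) {R : ℝ} (hR : 0 < R) :
    ∫ x, cutoff R x ^ 4 * gradSq (vort v) x ≤
      2 * (∫ x, cutoff R x ^ 4 * -(vort v x * lap (vort v) x)) +
        16 * (cutoffGradBound / R ^ 2 * ∫ x, vort v x ^ 2) := by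
  have h := integral_cutoff_pow_four_mul_gradSq_le hR (contDiff_vort hv (by norm_num))
    (by simpa only [norm_eq_abs, sq_abs] using integrable_vort_sq (hv.of_le (by norm_num)) hgrad)
  simp only [norm_eq_abs, sq_abs] at h
  have hinner (x : ℝ × ℝ) : ⟪vort v x, vecLap (vort v) x⟫ = vort v x * lap (vort v) x :=
    mul_comm _ _
  simpa only [hinner] using h

namespace IsFiniteEnergyMHD

variable {μ ν : ℝ} {u b : ℝ × ℝ → ℝ × ℝ} (h : IsFiniteEnergyMHD μ ν u b)
include h

theorem contDiff_mhdState : ContDiff ℝ 3 (mhdState u b) :=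
  contDiff_l2Pair (contDiff_eucl h.contDiff_velocity) (contDiff_eucl h.contDiff_magnetic)

theorem integrable_gradSq_mhdState : Integrable (gradSq (mhdState u b)) :=
  (h.integrable_velocity.add h.integrable_magnetic).congr (ae_of_all _ fun x =>
    (gradSq_mhdState (h.contDiff_velocity.of_le (by norm_num))
      (h.contDiff_magnetic.of_le (by norm_num)) x).symm)

theorem norm_vecLap_mhdState_sq (x : ℝ × ℝ) :
    ‖vecLap (mhdState u b) x‖ ^ 2 = gradSq (vort u) x + gradSq (vort b) x := by
  have hu := h.contDiff_velocity.of_le (show 2 ≤ 3 by norm_num)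
  have hb := h.contDiff_magnetic.of_le (show 2 ≤ 3 by norm_num)
  rw [mhdState, norm_vecLap_l2Pair_sq (contDiff_eucl hu) (contDiff_eucl hb),
    norm_vecLap_eucl_sq hu h.divg_velocity, norm_vecLap_eucl_sq hb h.divg_magnetic]

theorem enstrophy_balance (x : ℝ × ℝ) :
    μ * -(vort u x * lap (vort u) x) + ν * -(vort b x * lap (vort b) x) =
      stretching u b x * vort b x + divg (enstrophyFlux u b) x := by
  rw [divg_enstrophyFlux (h.contDiff_velocity.of_le (by norm_num))
    (h.contDiff_magnetic.of_le (by norm_num)) (h.divg_velocity x) (h.divg_magnetic x)]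
  linear_combination -vort u x * h.lap_vorticity x - vort b x * h.lap_current x

theorem continuous_stretching_mul_current :
    Continuous fun x => stretching u b x * vort b x :=
  (continuous_stretching (h.contDiff_velocity.of_le (by norm_num))
    (h.contDiff_magnetic.of_le (by norm_num))).mul
    (contDiff_vort (m := 2) h.contDiff_magnetic (by norm_num)).continuous

theorem integral_cutoff_enstrophy_balance {R : ℝ} (hR : 0 < R) :
    μ * (∫ x, cutoff R x ^ 4 * -(vort u x * lap (vort u) x)) +
      ν * (∫ x, cutoff R x ^ 4 * -(vort b x * lap (vort b) x)) =
      (∫ x, cutoff R x ^ 4 * (stretching u b x * vort b x)) +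
        ∫ x, cutoff R x ^ 4 * divg (enstrophyFlux u b) x := by
  have hlap {v : ℝ × ℝ → ℝ × ℝ} (hv : ContDiff ℝ 3 v) :
      Integrable fun x => cutoff R x ^ 4 * -(vort v x * lap (vort v) x) :=
    have hw : ContDiff ℝ 2 (vort v) := contDiff_vort hv (by norm_num)
    integrable_cutoff_pow_mul hR four_ne_zero (hw.continuous.mul (continuous_vecLap hw)).neg
  have hu2 : ContDiff ℝ 2 u := h.contDiff_velocity.of_le (by norm_num)
  have hb2 : ContDiff ℝ 2 b := h.contDiff_magnetic.of_le (by norm_num)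
  rw [← integral_const_mul, ← integral_const_mul,
    ← integral_add ((hlap h.contDiff_velocity).const_mul μ)
      ((hlap h.contDiff_magnetic).const_mul ν),
    ← integral_add (integrable_cutoff_pow_mul hR four_ne_zero
      h.continuous_stretching_mul_current) (integrable_cutoff_pow_mul hR four_ne_zero
      (continuous_divg (contDiff_enstrophyFlux hu2 hb2)))]
  congr 1 with x
  linear_combination cutoff R x ^ 4 * h.enstrophy_balance x

theorem eventually_integral_cutoff_enstrophy_le {ε : ℝ} (hε : 0 < ε) :
    ∀ᶠ R in atTop, μ * (∫ x, cutoff R x ^ 4 * gradSq (vort u) x) +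
        ν * (∫ x, cutoff R x ^ 4 * gradSq (vort b) x) ≤
      2 * (∫ x, cutoff R x ^ 4 * (stretching u b x * vort b x)) +
        ε * ((∫ x, gradSq (mhdState u b) x) +
          (∫ x, cutoff R x ^ 8 * gradSq (mhdState u b) x ^ 2) + 2) := by
  have transport_le := eventually_integral_cutoff_pow_four_mul_divg_le
    (h.contDiff_mhdState.of_le (by norm_num)) h.integrable_gradSq_mhdState
    (contDiff_enstrophyFlux (h.contDiff_velocity.of_le (by norm_num))
      (h.contDiff_magnetic.of_le (by norm_num)))
    (enstrophyFlux_sq_le (h.contDiff_velocity.of_le (by norm_num))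
      (h.contDiff_magnetic.of_le (by norm_num))) (half_pos hε)
  have cutoff_error_le := (tendsto_const_div_sq_atTop (16 * cutoffGradBound *
    (μ * (∫ x, vort u x ^ 2) + ν * ∫ x, vort b x ^ 2))).eventually_le_const hε
  filter_upwards [transport_le, cutoff_error_le, eventually_gt_atTop 0] with R hW herr hR
  have hw := mul_le_mul_of_nonneg_left (integral_cutoff_pow_four_mul_gradSq_vort_le
    h.contDiff_velocity h.integrable_velocity hR) h.viscosity_pos.le
  have hj := mul_le_mul_of_nonneg_left (integral_cutoff_pow_four_mul_gradSq_vort_le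
    h.contDiff_magnetic h.integrable_magnetic hR) h.resistivity_pos.le
  have hbal := h.integral_cutoff_enstrophy_balance hR
  have herr' : μ * (16 * (cutoffGradBound / R ^ 2 * ∫ x, vort u x ^ 2)) +
      ν * (16 * (cutoffGradBound / R ^ 2 * ∫ x, vort b x ^ 2)) ≤ ε :=
    le_of_eq_of_le (by ring) herr
  linarith

theorem stretching_sq_le_gradSq_sq (x : ℝ × ℝ) :
    stretching u b x ^ 2 ≤ gradSq (mhdState u b) x ^ 2 := by
  rw [gradSq_mhdState (h.contDiff_velocity.of_le (by norm_num))
    (h.contDiff_magnetic.of_le (by norm_num))]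
  linarith [stretching_sq_le (h.contDiff_velocity.differentiable (by simp))
    (h.contDiff_magnetic.differentiable (by simp)) x,
    sq_nonneg (gradSq (eucl u) x - gradSq (eucl b) x)]

theorem integrable_current_sq : Integrable fun x => vort b x ^ 2 :=
  integrable_vort_sq (h.contDiff_magnetic.of_le (by norm_num)) h.integrable_magnetic

theorem integral_cutoff_stretching_mul_current_le {R ε : ℝ} (hR : 0 < R) (hε : 0 < ε) :
    ∫ x, cutoff R x ^ 4 * (stretching u b x * vort b x) ≤
      ε * (∫ x, cutoff R x ^ 8 * gradSq (mhdState u b) x ^ 2) +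
        (4 * ε)⁻¹ * ∫ x, vort b x ^ 2 := by
  have hGc : Continuous fun x => gradSq (mhdState u b) x ^ 2 :=
    (continuous_gradSq (h.contDiff_mhdState.of_le (by norm_num))).pow 2
  have hG := (integrable_cutoff_pow_mul hR (k := 8) (by norm_num) hGc).const_mul ε
  have hj := h.integrable_current_sq.const_mul (4 * ε)⁻¹
  rw [← integral_const_mul, ← integral_const_mul, ← integral_add hG hj]
  refine integral_mono (integrable_cutoff_pow_mul hR four_ne_zero
    h.continuous_stretching_mul_current) (hG.add hj) fun x => ?_
  have young : cutoff R x ^ 4 * (stretching u b x * vort b x) ≤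
      ε * (cutoff R x ^ 8 * stretching u b x ^ 2) + (4 * ε)⁻¹ * vort b x ^ 2 := by
    have hsq : ε * (cutoff R x ^ 8 * stretching u b x ^ 2) + (4 * ε)⁻¹ * vort b x ^ 2 -
        cutoff R x ^ 4 * (stretching u b x * vort b x) =
        ε * (cutoff R x ^ 4 * stretching u b x - (2 * ε)⁻¹ * vort b x) ^ 2 := by
      field_simp
      ring
    linarith [mul_nonneg hε.le (sq_nonneg (cutoff R x ^ 4 * stretching u b x -
      (2 * ε)⁻¹ * vort b x))]
  have hS := h.stretching_sq_le_gradSq_sq x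
  exact young.trans (by gcongr)

theorem integrable_norm_vecLap_mhdState_sq :
    Integrable fun x => ‖vecLap (mhdState u b) x‖ ^ 2 := by
  have hm : 0 < min μ ν := lt_min h.viscosity_pos h.resistivity_pos
  refine integrable_norm_vecLap_sq_of_cutoff h.contDiff_mhdState h.integrable_gradSq_mhdState
    fun ε hε => ⟨((2 * (4 * (min μ ν * ε / 3))⁻¹ * ∫ x, vort b x ^ 2) +
      min μ ν * ε / 3 * ((∫ x, gradSq (mhdState u b) x) + 2)) / min μ ν, ?_⟩
  have hδ : 0 < min μ ν * ε / 3 := by positivity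
  filter_upwards [h.eventually_integral_cutoff_enstrophy_le hδ, eventually_gt_atTop 0] with R hD hR
  have hS := h.integral_cutoff_stretching_mul_current_le hR hδ
  have hcont {v : ℝ × ℝ → ℝ × ℝ} (hv : ContDiff ℝ 3 v) : Continuous (gradSq (vort v)) :=
    continuous_gradSq (contDiff_vort hv (by norm_num))
  have split : ∫ x, cutoff R x ^ 4 * ‖vecLap (mhdState u b) x‖ ^ 2 =
      (∫ x, cutoff R x ^ 4 * gradSq (vort u) x) + ∫ x, cutoff R x ^ 4 * gradSq (vort b) x := by
    rw [← integral_add (integrable_cutoff_pow_mul hR four_ne_zero (hcont h.contDiff_velocity))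
      (integrable_cutoff_pow_mul hR four_ne_zero (hcont h.contDiff_magnetic))]
    simp only [h.norm_vecLap_mhdState_sq, mul_add]
  have hw := mul_le_mul_of_nonneg_right (min_le_left μ ν)
    (integral_cutoff_pow_mul_nonneg R 4 (gradSq_nonneg (vort u)))
  have hj := mul_le_mul_of_nonneg_right (min_le_right μ ν)
    (integral_cutoff_pow_mul_nonneg R 4 (gradSq_nonneg (vort b)))
  rw [split]
  refine le_of_mul_le_mul_left ?_ hm
  rw [mul_add, mul_add, mul_div_cancel₀ _ hm.ne']
  linarith

theorem integrable_hessSq_mhdState : Integrable (hessSq (mhdState u b)) :=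
  (integrable_and_integral_hessSq_le h.contDiff_mhdState h.integrable_gradSq_mhdState
    h.integrable_norm_vecLap_mhdState_sq).1

theorem integrable_gradSq_vort :
    Integrable (gradSq (vort u)) ∧ Integrable (gradSq (vort b)) := by
  have hle {f : ℝ × ℝ → ℝ} (hf : ContDiff ℝ 1 f)
      (hfle : ∀ x, gradSq f x ≤ ‖vecLap (mhdState u b) x‖ ^ 2) : Integrable (gradSq f) :=
    h.integrable_norm_vecLap_mhdState_sq.mono' (continuous_gradSq hf).aestronglyMeasurable
      (ae_of_all _ fun x => by rw [norm_of_nonneg (gradSq_nonneg f x)]; exact hfle x)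
  refine ⟨hle (contDiff_vort h.contDiff_velocity (by norm_num)) fun x => ?_,
    hle (contDiff_vort h.contDiff_magnetic (by norm_num)) fun x => ?_⟩
  · linarith [h.norm_vecLap_mhdState_sq x, gradSq_nonneg (vort b) x]
  · linarith [h.norm_vecLap_mhdState_sq x, gradSq_nonneg (vort u) x]

theorem integrable_gradSq_mhdState_sq : Integrable fun x => gradSq (mhdState u b) x ^ 2 :=
  (integrable_and_integral_gradSq_sq_le (h.contDiff_mhdState.of_le (by norm_num))
    h.integrable_gradSq_mhdState h.integrable_hessSq_mhdState).1

theorem integrable_stretching_mul_current :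
    Integrable fun x => |stretching u b x * vort b x| :=
  (h.integrable_gradSq_mhdState_sq.add h.integrable_current_sq).mono'
    h.continuous_stretching_mul_current.abs.aestronglyMeasurable (ae_of_all _ fun x => by
      rw [norm_eq_abs, abs_abs, Pi.add_apply, abs_le]
      constructor <;> nlinarith [h.stretching_sq_le_gradSq_sq x,
        sq_nonneg (stretching u b x + vort b x), sq_nonneg (stretching u b x - vort b x)])

theorem enstrophy_dissipation_le :
    μ * (∫ x, gradSq (vort u) x) + ν * (∫ x, gradSq (vort b) x) ≤
      2 * ∫ x, |stretching u b x * vort b x| := by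
  obtain ⟨hw, hj⟩ := h.integrable_gradSq_vort
  set C := (∫ x, gradSq (mhdState u b) x) + (∫ x, gradSq (mhdState u b) x ^ 2) + 2
  have hC : 0 < C := add_pos_of_nonneg_of_pos (add_nonneg
    (integral_nonneg (gradSq_nonneg _)) (integral_nonneg fun x => sq_nonneg _)) two_pos
  have hcont {v : ℝ × ℝ → ℝ × ℝ} (hv : ContDiff ℝ 3 v) : Continuous (gradSq (vort v)) :=
    continuous_gradSq (contDiff_vort hv (by norm_num))
  have hlim {ε : ℝ} (hε : 0 < ε) : ∫ x, (μ * gradSq (vort u) x + ν * gradSq (vort b) x) ≤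
      2 * (∫ x, |stretching u b x * vort b x|) + ε * C := by
    refine (integrable_and_integral_le_of_cutoff (k := 4)
      ((hcont h.contDiff_velocity).const_mul μ |>.add ((hcont h.contDiff_magnetic).const_mul ν))
      (fun x => ?_) four_ne_zero tendsto_const_nhds ?_).2
    · exact add_nonneg (mul_nonneg h.viscosity_pos.le (gradSq_nonneg _ x))
        (mul_nonneg h.resistivity_pos.le (gradSq_nonneg _ x))
    filter_upwards [h.eventually_integral_cutoff_enstrophy_le hε, eventually_gt_atTop 0]
      with R hD hR
    have hS : ∫ x, cutoff R x ^ 4 * (stretching u b x * vort b x) ≤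
        ∫ x, |stretching u b x * vort b x| :=
      integral_mono (integrable_cutoff_pow_mul hR four_ne_zero h.continuous_stretching_mul_current)
        h.integrable_stretching_mul_current fun x => (mul_le_mul_of_nonneg_left (le_abs_self _)
          (pow_nonneg (cutoff_nonneg R x) 4)).trans (cutoff_pow_mul_le R 4 (abs_nonneg _) x)
    have hQ := integral_cutoff_pow_mul_le (R := R) (fun x => sq_nonneg _)
      h.integrable_gradSq_mhdState_sq 8
    rw [← integral_const_mul, ← integral_const_mul, ← integral_add
      ((integrable_cutoff_pow_mul hR four_ne_zero (hcont h.contDiff_velocity)).const_mul μ)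
      ((integrable_cutoff_pow_mul hR four_ne_zero (hcont h.contDiff_magnetic)).const_mul ν)] at hD
    calc ∫ x, cutoff R x ^ 4 * (μ * gradSq (vort u) x + ν * gradSq (vort b) x)
        = ∫ x, (μ * (cutoff R x ^ 4 * gradSq (vort u) x) +
            ν * (cutoff R x ^ 4 * gradSq (vort b) x)) := by
          congr 1 with x
          ring
      _ ≤ _ := hD
      _ ≤ _ := by linarith [mul_le_mul_of_nonneg_left hQ hε.le]
  rw [← integral_const_mul, ← integral_const_mul, ← integral_add (hw.const_mul μ) (hj.const_mul ν)]
  refine le_of_forall_pos_le_add fun ε hε => ?_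
  simpa only [div_mul_cancel₀ ε hC.ne'] using hlim (div_pos hε hC)

end IsFiniteEnergyMHD

/-! ### Closing the estimate -/

theorem integrable_and_integral_hessSq_eucl_le {v : ℝ × ℝ → ℝ × ℝ} (hv : ContDiff ℝ 3 v)
    (hdiv : ∀ x, divg v x = 0) (hgrad : Integrable (gradSq (eucl v)))
    (hvort : Integrable (gradSq (vort v))) :
    Integrable (hessSq (eucl v)) ∧ ∫ x, hessSq (eucl v) x ≤ 2 * ∫ x, gradSq (vort v) x := by
  have hlap : (fun x => ‖vecLap (eucl v) x‖ ^ 2) = gradSq (vort v) :=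
    funext (norm_vecLap_eucl_sq (hv.of_le (by norm_num)) hdiv)
  simpa only [hlap, congrFun hlap] using
    integrable_and_integral_hessSq_le (contDiff_eucl hv) hgrad (by rwa [hlap])

namespace IsFiniteEnergyMHD

variable {μ ν : ℝ} {u b : ℝ × ℝ → ℝ × ℝ} (h : IsFiniteEnergyMHD μ ν u b)
include h

theorem integrable_and_integral_hessSq_velocity_le : Integrable (hessSq (eucl u)) ∧
    ∫ x, hessSq (eucl u) x ≤ 2 * ∫ x, gradSq (vort u) x :=
  integrable_and_integral_hessSq_eucl_le h.contDiff_velocity h.divg_velocity h.integrable_velocity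
    h.integrable_gradSq_vort.1

theorem integrable_and_integral_hessSq_magnetic_le : Integrable (hessSq (eucl b)) ∧
    ∫ x, hessSq (eucl b) x ≤ 2 * ∫ x, gradSq (vort b) x :=
  integrable_and_integral_hessSq_eucl_le h.contDiff_magnetic h.divg_magnetic h.integrable_magnetic
    h.integrable_gradSq_vort.2

theorem dissipation_le :
    μ * (∫ x, hessSq (eucl u) x) + ν * (∫ x, hessSq (eucl b) x) ≤
      4 * ∫ x, |stretching u b x * vort b x| := by
  linarith [h.enstrophy_dissipation_le,
    mul_le_mul_of_nonneg_left h.integrable_and_integral_hessSq_velocity_le.2 h.viscosity_pos.le,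
    mul_le_mul_of_nonneg_left h.integrable_and_integral_hessSq_magnetic_le.2 h.resistivity_pos.le]

theorem integrable_and_sq_integral_gradSq_mul_gradSq_le :
    Integrable (fun x => gradSq (eucl u) x * gradSq (eucl b) x) ∧
    (∫ x, gradSq (eucl u) x * gradSq (eucl b) x) ^ 2 ≤ 4 * ladyzhenskayaConst ^ 2 *
      ((∫ x, gradSq (eucl u) x) * (∫ x, hessSq (eucl u) x)) *
      ((∫ x, gradSq (eucl b) x) * (∫ x, hessSq (eucl b) x)) := by
  have hu := contDiff_eucl (h.contDiff_velocity.of_le (by norm_num : (2 : WithTop ℕ∞) ≤ 3))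
  have hb := contDiff_eucl (h.contDiff_magnetic.of_le (by norm_num : (2 : WithTop ℕ∞) ≤ 3))
  obtain ⟨hu2, hu_le⟩ := integrable_and_integral_gradSq_sq_le hu h.integrable_velocity
    h.integrable_and_integral_hessSq_velocity_le.1
  obtain ⟨hb2, hb_le⟩ := integrable_and_integral_gradSq_sq_le hb h.integrable_magnetic
    h.integrable_and_integral_hessSq_magnetic_le.1
  have hum := (continuous_gradSq (hu.of_le one_le_two)).aestronglyMeasurable (μ := volume)
  have hbm := (continuous_gradSq (hb.of_le one_le_two)).aestronglyMeasurable (μ := volume)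
  refine ⟨integrable_mul_of_sq hum hbm hu2 hb2, (sq_integral_mul_le hum hbm hu2 hb2).trans ?_⟩
  refine (mul_le_mul hu_le hb_le (integral_nonneg fun x => sq_nonneg _)
    ((integral_nonneg fun x => sq_nonneg _).trans hu_le)).trans_eq ?_
  ring

theorem sq_integral_stretching_mul_current_le :
    (∫ x, |stretching u b x * vort b x|) ^ 2 ≤
      8 * (∫ x, gradSq (eucl u) x * gradSq (eucl b) x) * ∫ x, gradSq (eucl b) x := by
  have hu : Differentiable ℝ u := h.contDiff_velocity.differentiable (by simp)
  have hb : Differentiable ℝ b := h.contDiff_magnetic.differentiable (by simp)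
  have hSc : Continuous (stretching u b) := continuous_stretching
    (h.contDiff_velocity.of_le (by norm_num)) (h.contDiff_magnetic.of_le (by norm_num))
  have hjc : Continuous (vort b) :=
    (contDiff_vort (m := 2) h.contDiff_magnetic (by norm_num)).continuous
  have hG := h.integrable_and_sq_integral_gradSq_mul_gradSq_le.1.const_mul 4
  have hS : Integrable fun x => stretching u b x ^ 2 :=
    hG.mono' (hSc.pow 2).aestronglyMeasurable (ae_of_all _ fun x => by
      simpa only [norm_pow, norm_eq_abs, sq_abs] using stretching_sq_le hu hb x)
  have hS_le : ∫ x, stretching u b x ^ 2 ≤ 4 * ∫ x, gradSq (eucl u) x * gradSq (eucl b) x := by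
    rw [← integral_const_mul]
    exact integral_mono hS hG (stretching_sq_le hu hb)
  have hj_le : ∫ x, vort b x ^ 2 ≤ 2 * ∫ x, gradSq (eucl b) x := by
    rw [← integral_const_mul]
    exact integral_mono h.integrable_current_sq (h.integrable_magnetic.const_mul 2) (vort_sq_le hb)
  have cauchy_schwarz := sq_integral_mul_le hSc.abs.aestronglyMeasurable
    hjc.abs.aestronglyMeasurable (m := volume) (by simpa only [sq_abs] using hS)
    (by simpa only [sq_abs] using h.integrable_current_sq)
  simp only [← abs_mul, sq_abs] at cauchy_schwarz
  refine cauchy_schwarz.trans ((mul_le_mul hS_le hj_le (integral_nonneg fun x => sq_nonneg _)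
    ((integral_nonneg fun x => sq_nonneg _).trans hS_le)).trans_eq ?_)
  ring

theorem dissipation_pow_four_le (hb1 : Integrable fun x => ‖eucl b x‖) :
    (μ * (∫ x, hessSq (eucl u) x) + ν * ∫ x, hessSq (eucl b) x) ^ 4 ≤
      2 ^ 23 * ladyzhenskayaConst ^ 3 * (∫ x, ‖eucl b x‖) ^ 2 * (∫ x, gradSq (eucl u) x) *
        ((∫ x, hessSq (eucl u) x) * (∫ x, hessSq (eucl b) x) ^ 3) := by
  have nash := integral_gradSq_pow_three_le
    (contDiff_eucl (h.contDiff_magnetic.of_le (by norm_num))) hb1 h.integrable_magnetic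
    h.integrable_and_integral_hessSq_magnetic_le.1
  have trilinear := h.sq_integral_stretching_mul_current_le
  have ladyzhenskaya := h.integrable_and_sq_integral_gradSq_mul_gradSq_le.2
  have dissipation := h.dissipation_le
  have hX : 0 ≤ ∫ x, hessSq (eucl u) x := integral_nonneg (hessSq_nonneg _)
  have hY : 0 ≤ ∫ x, hessSq (eucl b) x := integral_nonneg (hessSq_nonneg _)
  have hA : 0 ≤ ∫ x, gradSq (eucl u) x := integral_nonneg (gradSq_nonneg _)
  have hB : 0 ≤ ∫ x, gradSq (eucl b) x := integral_nonneg (gradSq_nonneg _)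
  have hK := ladyzhenskayaConst_pos
  have hμ := h.viscosity_pos
  have hν := h.resistivity_pos
  set X := ∫ x, hessSq (eucl u) x
  set Y := ∫ x, hessSq (eucl b) x
  set A := ∫ x, gradSq (eucl u) x
  set B := ∫ x, gradSq (eucl b) x
  set N := ∫ x, ‖eucl b x‖
  set S := ∫ x, |stretching u b x * vort b x|
  set W := ∫ x, gradSq (eucl u) x * gradSq (eucl b) x
  set K := ladyzhenskayaConst
  calc (μ * X + ν * Y) ^ 4 ≤ (4 * S) ^ 4 := by gcongr
    _ = 2 ^ 8 * (S ^ 2) ^ 2 := by ring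
    _ ≤ 2 ^ 8 * (8 * W * B) ^ 2 := by gcongr
    _ = 2 ^ 14 * B ^ 2 * W ^ 2 := by ring
    _ ≤ 2 ^ 14 * B ^ 2 * (4 * K ^ 2 * (A * X) * (B * Y)) := by gcongr
    _ = 2 ^ 16 * K ^ 2 * A * X * Y * B ^ 3 := by ring
    _ ≤ 2 ^ 16 * K ^ 2 * A * X * Y * (128 * K * N ^ 2 * Y ^ 2) := by gcongr
    _ = 2 ^ 23 * K ^ 3 * N ^ 2 * A * (X * Y ^ 3) := by ring

end IsFiniteEnergyMHD

theorem eq_zero_of_add_pow_four_le {x y c : ℝ} (hx : 0 ≤ x) (hy : 0 ≤ y) (hc : c < 1)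
    (h : (x + y) ^ 4 ≤ c * (x * y ^ 3)) : x = 0 ∧ y = 0 := by
  have amgm : x * y ^ 3 ≤ (x + y) ^ 4 :=
    calc x * y ^ 3 ≤ (x + y) * (x + y) ^ 3 := by gcongr <;> linarith
      _ = (x + y) ^ 4 := by ring
  have hP : x * y ^ 3 = 0 := le_antisymm (by nlinarith) (by positivity)
  have hle : (x + y) ^ 4 ≤ 0 := by simpa only [hP, mul_zero] using h
  exact (add_eq_zero_iff_of_nonneg hx hy).1
    ((pow_eq_zero_iff four_ne_zero).1 (hle.antisymm (by positivity)))

theorem eq_of_integral_hessSq_eucl_eq_zero {v : ℝ × ℝ → ℝ × ℝ} (hv : ContDiff ℝ 2 v)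
    (hgrad : Integrable (gradSq (eucl v))) (hhess : Integrable (hessSq (eucl v)))
    (hzero : ∫ x, hessSq (eucl v) x = 0) (x y : ℝ × ℝ) : v x = v y :=
  WithLp.toLp_injective 2 (eq_of_integral_hessSq_eq_zero (contDiff_eucl hv) hgrad hhess hzero x y)

theorem norm_eucl_le (v : ℝ × ℝ → ℝ × ℝ) (x : ℝ × ℝ) : ‖eucl v x‖ ≤ 2 * ‖v x‖ := by
  refine le_of_sq_le_sq ?_ (by positivity)
  have hsq {a : ℝ} (ha : ‖a‖ ≤ ‖v x‖) : a ^ 2 ≤ ‖v x‖ ^ 2 := sq_le_sq.2 (by rwa [abs_norm])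
  rw [norm_sq_eucl, mul_pow]
  linarith [hsq (norm_fst_le (v x)), hsq (norm_snd_le (v x)), sq_nonneg ‖v x‖]

theorem gradSq_eucl_le {v : ℝ × ℝ → ℝ × ℝ} (hv : Differentiable ℝ v) (x : ℝ × ℝ) :
    gradSq (eucl v) x ≤ 4 * ‖fderiv ℝ v x‖ ^ 2 := by
  have h₁ : ‖∂₁ v x‖ ≤ ‖fderiv ℝ v x‖ :=
    (fderiv ℝ v x).unit_le_opNorm _ (by simp [Prod.norm_def])
  have h₂ : ‖∂₂ v x‖ ≤ ‖fderiv ℝ v x‖ :=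
    (fderiv ℝ v x).unit_le_opNorm _ (by simp [Prod.norm_def])
  have hsq {a : ℝ} (ha : ‖a‖ ≤ ‖fderiv ℝ v x‖) : a ^ 2 ≤ ‖fderiv ℝ v x‖ ^ 2 :=
    sq_le_sq.2 (by rwa [abs_norm])
  rw [gradSq_eucl hv]
  linarith [hsq ((norm_fst_le _).trans h₁), hsq ((norm_snd_le _).trans h₁),
    hsq ((norm_fst_le _).trans h₂), hsq ((norm_snd_le _).trans h₂)]

theorem integrable_and_integral_gradSq_eucl_le {v : ℝ × ℝ → ℝ × ℝ} (hv : ContDiff ℝ 1 v)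
    (hgrad : Integrable fun x => ‖fderiv ℝ v x‖ ^ 2) :
    Integrable (gradSq (eucl v)) ∧
      ∫ x, gradSq (eucl v) x ≤ 4 * ∫ x, ‖fderiv ℝ v x‖ ^ 2 := by
  have hle := gradSq_eucl_le (hv.differentiable one_ne_zero)
  have hint : Integrable (gradSq (eucl v)) :=
    (hgrad.const_mul 4).mono' (continuous_gradSq (contDiff_eucl hv)).aestronglyMeasurable
      (ae_of_all _ fun x => by rw [norm_of_nonneg (gradSq_nonneg _ x)]; exact hle x)
  refine ⟨hint, ?_⟩
  rw [← integral_const_mul]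
  exact integral_mono hint (hgrad.const_mul 4) hle

theorem integrable_and_integral_norm_eucl_le {v : ℝ × ℝ → ℝ × ℝ} (hv : Continuous v)
    (hint : Integrable fun x => ‖v x‖) :
    Integrable (fun x => ‖eucl v x‖) ∧ ∫ x, ‖eucl v x‖ ≤ 2 * ∫ x, ‖v x‖ := by
  have heucl : Integrable fun x => ‖eucl v x‖ :=
    (hint.const_mul 2).mono'
      (contDiff_eucl (contDiff_zero.2 hv)).continuous.norm.aestronglyMeasurable
      (ae_of_all _ fun x => by rw [norm_norm]; exact norm_eucl_le v x)
  refine ⟨heucl, ?_⟩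
  rw [← integral_const_mul]
  exact integral_mono heucl (hint.const_mul 2) (norm_eucl_le v)

theorem IsFiniteEnergyMHD.integral_hessSq_eq_zero {μ ν : ℝ} {u b : ℝ × ℝ → ℝ × ℝ}
    (h : IsFiniteEnergyMHD μ ν u b) (hb : Integrable fun x => ‖eucl b x‖)
    (hsmall : 2 ^ 23 * ladyzhenskayaConst ^ 3 * (∫ x, ‖eucl b x‖) ^ 2 *
      (∫ x, gradSq (eucl u) x) < μ * ν ^ 3) :
    ∫ x, hessSq (eucl u) x = 0 ∧ ∫ x, hessSq (eucl b) x = 0 := by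
  have hμ := h.viscosity_pos
  have hν := h.resistivity_pos
  have hX : 0 ≤ ∫ x, hessSq (eucl u) x := integral_nonneg (hessSq_nonneg _)
  have hY : 0 ≤ ∫ x, hessSq (eucl b) x := integral_nonneg (hessSq_nonneg _)
  obtain ⟨hX0, hY0⟩ := eq_zero_of_add_pow_four_le (mul_nonneg hμ.le hX) (mul_nonneg hν.le hY)
    ((div_lt_one (by positivity)).2 hsmall)
    ((h.dissipation_pow_four_le hb).trans_eq (by field_simp))
  exact ⟨(mul_eq_zero.1 hX0).resolve_left hμ.ne', (mul_eq_zero.1 hY0).resolve_left hν.ne'⟩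

theorem IsFiniteEnergyMHD.eq_and_magnetic_eq_zero {μ ν : ℝ} {u b : ℝ × ℝ → ℝ × ℝ}
    (h : IsFiniteEnergyMHD μ ν u b) (hb : Integrable fun x => ‖eucl b x‖)
    (hsmall : 2 ^ 23 * ladyzhenskayaConst ^ 3 * (∫ x, ‖eucl b x‖) ^ 2 *
      (∫ x, gradSq (eucl u) x) < μ * ν ^ 3) :
    (∀ x y, u x = u y) ∧ ∀ x, b x = 0 := by
  obtain ⟨hX, hY⟩ := h.integral_hessSq_eq_zero hb hsmall
  have hb_const := eq_of_integral_hessSq_eucl_eq_zero (h.contDiff_magnetic.of_le (by norm_num))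
    h.integrable_magnetic h.integrable_and_integral_hessSq_magnetic_le.1 hY
  refine ⟨eq_of_integral_hessSq_eucl_eq_zero (h.contDiff_velocity.of_le (by norm_num))
    h.integrable_velocity h.integrable_and_integral_hessSq_velocity_le.1 hX, fun x => ?_⟩
  have hnorm : ‖eucl b x‖ = 0 := eq_zero_of_integrable_const <| by
    simpa only [eucl, l2Pair, hb_const _ x] using hb
  exact WithLp.toLp_injective 2 (norm_eq_zero.1 hnorm)

theorem exists_sq_mul_lt_of_mul_rpow_le {K : ℝ} (hK : 0 < K) : ∃ C > 0, ∀ {μ ν N D : ℝ},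
    0 < μ → 0 < ν → 0 ≤ N → 0 ≤ D →
    N * D ^ (1 / 2 : ℝ) ≤ C * (μ ^ (1 / 2 : ℝ) * ν ^ (3 / 2 : ℝ)) →
    K * N ^ 2 * D < μ * ν ^ 3 := by
  refine ⟨√(1 / (2 * K)), by positivity, fun {μ ν N D} hμ hν hN hD h => ?_⟩
  have sq_rpow {y : ℝ} (hy : 0 ≤ y) (k : ℕ) : (y ^ (k / 2 : ℝ)) ^ 2 = y ^ k := by
    rw [← rpow_mul_natCast hy, Nat.cast_two, div_mul_cancel₀ _ two_ne_zero, rpow_natCast]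
  have hsq := pow_le_pow_left₀ (by positivity) h 2
  have hD2 := sq_rpow hD 1
  have hμ2 := sq_rpow hμ.le 1
  have hν3 := sq_rpow hν.le 3
  push_cast at hD2 hμ2 hν3
  rw [mul_pow, mul_pow, mul_pow, hD2, hμ2, hν3, pow_one, pow_one, sq_sqrt (by positivity)] at hsq
  calc K * N ^ 2 * D = K * (N ^ 2 * D) := by ring
    _ ≤ K * (1 / (2 * K) * (μ * ν ^ 3)) := by gcongr
    _ = μ * ν ^ 3 / 2 := by field_simp
    _ < μ * ν ^ 3 := half_lt_self (by positivity)

theorem mhd_liouville_dirichlet_general :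
    ∃ C : ℝ, 0 < C ∧
      ∀ (μ ν : ℝ), 0 < μ → 0 < ν →
      ∀ (u b : ℝ × ℝ → ℝ × ℝ) (pr : ℝ × ℝ → ℝ),
      ContDiff ℝ 3 u → ContDiff ℝ 3 b → ContDiff ℝ 2 pr → isMHD μ ν u b pr →
      Integrable (fun x => ‖fderiv ℝ u x‖ ^ 2) → Integrable (fun x => ‖fderiv ℝ b x‖ ^ 2) →
      Integrable (fun x => ‖b x‖) →
      (∫ x, ‖b x‖) * (∫ x, ‖fderiv ℝ u x‖ ^ 2) ^ (1 / 2 : ℝ)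
          ≤ C * (μ ^ (1 / 2 : ℝ) * ν ^ (3 / 2 : ℝ)) →
      (∀ x y, u x = u y) ∧ (∀ x, b x = 0) := by
  have hK := ladyzhenskayaConst_pos
  obtain ⟨C, hC, hsq⟩ := exists_sq_mul_lt_of_mul_rpow_le
    (K := 2 ^ 23 * ladyzhenskayaConst ^ 3 * 2 ^ 2 * 4) (by positivity)
  refine ⟨C, hC, fun μ ν hμ hν u b pr hu hb hpr h hDu hDb hb1 hsmall => ?_⟩
  obtain ⟨hgu, hgu_le⟩ := integrable_and_integral_gradSq_eucl_le (hu.of_le (by norm_num)) hDu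
  obtain ⟨hgb, -⟩ := integrable_and_integral_gradSq_eucl_le (hb.of_le (by norm_num)) hDb
  obtain ⟨hn, hn_le⟩ := integrable_and_integral_norm_eucl_le hb.continuous hb1
  refine (isFiniteEnergyMHD_of_isMHD hμ hν hu hb hpr h hgu hgb).eq_and_magnetic_eq_zero hn ?_
  have hA : 0 ≤ ∫ x, gradSq (eucl u) x := integral_nonneg (gradSq_nonneg _)
  have hD : 0 ≤ ∫ x, ‖fderiv ℝ u x‖ ^ 2 := integral_nonneg fun x => sq_nonneg _
  calc 2 ^ 23 * ladyzhenskayaConst ^ 3 * (∫ x, ‖eucl b x‖) ^ 2 * ∫ x, gradSq (eucl u) x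
      ≤ 2 ^ 23 * ladyzhenskayaConst ^ 3 * (2 * ∫ x, ‖b x‖) ^ 2 *
          (4 * ∫ x, ‖fderiv ℝ u x‖ ^ 2) := by gcongr
    _ = 2 ^ 23 * ladyzhenskayaConst ^ 3 * 2 ^ 2 * 4 * (∫ x, ‖b x‖) ^ 2 *
          ∫ x, ‖fderiv ℝ u x‖ ^ 2 := by ring
    _ < μ * ν ^ 3 := hsq hμ hν (integral_nonneg fun x => norm_nonneg _) hD hsmall

/-- Liouville theorem for 2D stationary MHD under finite Dirichlet energy and a
scale-invariant smallness condition on the magnetic field (Theorem 1.1). -/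
theorem mhd_liouville_dirichlet :
    ∃ Cstar : ℝ, 0 < Cstar ∧
      ∀ (μ ν : ℝ), 0 < μ → 0 < ν →
      ∀ (u b : ℝ × ℝ → ℝ × ℝ) (pr : ℝ × ℝ → ℝ),
      ContDiff ℝ (⊤ : ℕ∞) u → ContDiff ℝ (⊤ : ℕ∞) b → ContDiff ℝ (⊤ : ℕ∞) pr →
      isMHD μ ν u b pr →
      ∀ D0 : ℝ,
      MeasureTheory.Integrable (fun x => ‖fderiv ℝ u x‖ ^ 2 + ‖fderiv ℝ b x‖ ^ 2) →
      (∫ x, (‖fderiv ℝ u x‖ ^ 2 + ‖fderiv ℝ b x‖ ^ 2)) ≤ D0 →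
      MeasureTheory.Integrable (fun x => ‖b x‖) →
      (∫ x, ‖b x‖) * D0 ^ ((1:ℝ)/2)
          ≤ Cstar * min (μ * ν) (μ ^ ((1:ℝ)/2) * ν ^ ((3:ℝ)/2)) →
      (∀ x y, u x = u y) ∧ (∀ x, b x = 0) := by
  obtain ⟨C, hC, liouville⟩ := mhd_liouville_dirichlet_general
  refine ⟨C, hC, fun μ ν hμ hν u b pr hu hb hpr h D0 hD hD_le hb1 hsmall => ?_⟩
  have hDc {v : ℝ × ℝ → ℝ × ℝ} (hv : ContDiff ℝ ∞ v) : AEStronglyMeasurable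
      (fun x => ‖fderiv ℝ v x‖ ^ 2) :=
    ((hv.continuous_fderiv (by simp)).norm.pow 2).aestronglyMeasurable
  have hDu := hD.mono' (hDc hu) (ae_of_all _ fun x => by simp)
  have hDb := hD.mono' (hDc hb) (ae_of_all _ fun x => by simp)
  refine liouville μ ν hμ hν u b pr (hu.of_le (by norm_cast)) (hb.of_le (by norm_cast))
    (hpr.of_le (by norm_cast)) h hDu hDb hb1 ?_
  calc (∫ x, ‖b x‖) * (∫ x, ‖fderiv ℝ u x‖ ^ 2) ^ (1 / 2 : ℝ)
      ≤ (∫ x, ‖b x‖) * D0 ^ (1 / 2 : ℝ) := by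
        gcongr
        exact (integral_mono hDu hD fun x => by simp).trans hD_le
    _ ≤ C * min (μ * ν) (μ ^ (1 / 2 : ℝ) * ν ^ (3 / 2 : ℝ)) := hsmall
    _ ≤ C * (μ ^ (1 / 2 : ℝ) * ν ^ (3 / 2 : ℝ)) := by
        gcongr
        exact min_le_right _ _
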